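/- arXiv:1610.04158 — 3 statements merged into one kernel-verified Lean document; each statement's English description precedes it below -/
import Mathlib

section
/- Periodic minimum problem, small domains, small volume fraction: let τ ∈ (0,1), 0 < L ≤ min{τ, 1−τ} and 0 < σ < L. Then 4√(σL) is the least element of the set of values E^{#}_τ(v) as v ranges over Adm(L,σ): every v ∈ Adm(L,σ) satisfies E^{#}_τ(v) ≥ 4√(σL), and the function v = √(σL)·χ_{(s, s+√(σL))} attains this value for any 0 ≤ s ≤ L − √(σL). -/
open MeasureTheory Filter Set

noncomputable section

/-- `Adm L σ v` : `v` is admissible, i.e. `0 ≤ v ≤ 1` on `(0,L)`, `v` has finite pointwise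
total variation on `(0,L)` and `∫_{(0,L)} v = σL`. -/
def Adm (L σ : ℝ) (v : ℝ → ℝ) : Prop :=
  (∀ x ∈ Set.Ioo 0 L, 0 ≤ v x ∧ v x ≤ 1) ∧
  BoundedVariationOn v (Set.Ioo 0 L) ∧
  (∫ x in Set.Ioo 0 L, v x) = σ * L

/-- The interior part of the limit functional:
`2·λ({x ∈ (0,L) : 0 < v(x) < 1}) + Var(v;(0,L))`. -/
def Fvol (L : ℝ) (v : ℝ → ℝ) : ℝ :=
  2 * (volume {x ∈ Set.Ioo 0 L | 0 < v x ∧ v x < 1}).toReal +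
    (eVariationOn v (Set.Ioo 0 L)).toReal

/-- The boundary term `φ_τ(x,y) = λ( [0,1] ∩ ( ([−τ,x−τ] ∪ [1−τ,x+1−τ]) Δ [0,y] ) )`. -/
def phi (τ x y : ℝ) : ℝ :=
  (volume (Set.Icc (0 : ℝ) 1 ∩
    symmDiff (Set.Icc (-τ) (x - τ) ∪ Set.Icc (1 - τ) (x + 1 - τ)) (Set.Icc 0 y))).toReal

open MeasureTheory Filter Set

/-- The rotated interval, cut to `[0,1]`. -/
def rotS (τ x : ℝ) : Set ℝ :=
  Set.Icc (0 : ℝ) 1 ∩ (Set.Icc (-τ) (x - τ) ∪ Set.Icc (1 - τ) (x + 1 - τ))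

lemma rotS_meas (τ x : ℝ) : MeasurableSet (rotS τ x) := by
  unfold rotS
  exact measurableSet_Icc.inter (measurableSet_Icc.union measurableSet_Icc)

lemma rotS_vol (τ x : ℝ) (hτ : τ ∈ Set.Ioo (0 : ℝ) 1) (hx : x ∈ Set.Icc (0 : ℝ) 1) :
    volume.real (rotS τ x) = x := by
  obtain ⟨h0, h1⟩ := hτ
  obtain ⟨hx0, hx1⟩ := hx
  rcases lt_or_ge x τ with h | h
  · have : rotS τ x = Set.Icc (1 - τ) (x + 1 - τ) := by
      ext z
      simp only [rotS, Set.mem_inter_iff, Set.mem_union, Set.mem_Icc]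
      constructor
      · rintro ⟨⟨_, _⟩, ⟨_, _⟩ | h⟩
        · linarith
        · exact h
      · rintro ⟨_, _⟩
        refine ⟨⟨by linarith, by linarith⟩, Or.inr ⟨by linarith, by linarith⟩⟩
    rw [this, Real.volume_real_Icc_of_le (by linarith)]
    ring
  · have : rotS τ x = Set.Icc 0 (x - τ) ∪ Set.Icc (1 - τ) 1 := by
      ext z
      simp only [rotS, Set.mem_inter_iff, Set.mem_union, Set.mem_Icc]
      constructor
      · rintro ⟨⟨_, _⟩, ⟨_, _⟩ | ⟨_, _⟩⟩
        · left; constructor <;> linarith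
        · right; constructor <;> linarith
      · rintro (⟨_, _⟩ | ⟨_, _⟩)
        · refine ⟨⟨by linarith, by linarith⟩, Or.inl ⟨by linarith, by linarith⟩⟩
        · refine ⟨⟨by linarith, by linarith⟩, Or.inr ⟨by linarith, by linarith⟩⟩
    have hn : volume.real (Set.Icc 0 (x - τ) ∩ Set.Icc (1 - τ) 1) = 0 := by
      rw [Set.Icc_inter_Icc, Real.volume_real_Icc]
      apply max_eq_right
      have h2 : (x - τ) ⊓ 1 ≤ x - τ := inf_le_left
      have h3 : 1 - τ ≤ 0 ⊔ (1 - τ) := le_sup_right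
      linarith
    have := measureReal_union_add_inter (μ := volume) (s := Set.Icc 0 (x - τ))
      (t := Set.Icc (1 - τ) 1) measurableSet_Icc (measure_Icc_lt_top).ne (measure_Icc_lt_top).ne
    rw [hn, Real.volume_real_Icc_of_le (by linarith),
      Real.volume_real_Icc_of_le (by linarith)] at this
    rw [‹rotS τ x = _›]
    linarith

lemma rotS_fin (τ x : ℝ) : volume (rotS τ x) ≠ ⊤ :=
  ((measure_mono inter_subset_left).trans_lt (measure_Icc_lt_top (a := (0:ℝ)) (b := 1))).ne

lemma phi_eq (τ x y : ℝ) (hτ : τ ∈ Set.Ioo (0 : ℝ) 1) (hx : x ∈ Set.Icc (0 : ℝ) 1)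
    (hy : y ∈ Set.Icc (0 : ℝ) 1) :
    phi τ x y = x + y - 2 * volume.real (rotS τ x ∩ Set.Icc 0 y) := by
  have h1 : Set.Icc (0 : ℝ) 1 ∩
    symmDiff (Set.Icc (-τ) (x - τ) ∪ Set.Icc (1 - τ) (x + 1 - τ)) (Set.Icc 0 y)
      = (rotS τ x \ Set.Icc 0 y) ∪ (Set.Icc 0 y \ rotS τ x) := by
    ext z
    have : z ∈ Set.Icc 0 y → z ∈ Set.Icc (0:ℝ) 1 := fun h => ⟨h.1, h.2.trans hy.2⟩
    simp only [rotS, Set.mem_inter_iff, Set.mem_union, Set.mem_symmDiff, Set.mem_sdiff]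
    tauto
  unfold phi
  rw [h1]
  change volume.real _ = _
  have hfin := rotS_fin τ x
  have hfin2 : volume (Set.Icc 0 y) ≠ ⊤ := (measure_Icc_lt_top).ne
  rw [measureReal_union (disjoint_sdiff_sdiff) (measurableSet_Icc.diff (rotS_meas τ x))
    (measure_ne_top_of_subset sdiff_subset hfin) (measure_ne_top_of_subset sdiff_subset hfin2)]
  have e1 := measureReal_inter_add_sdiff (μ := volume) (s := rotS τ x)
    (measurableSet_Icc (a := (0:ℝ)) (b := y)) hfin
  have e2 := measureReal_inter_add_sdiff (μ := volume) (s := Set.Icc 0 y)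
    (rotS_meas τ x) hfin2
  rw [rotS_vol τ x hτ hx] at e1
  rw [Set.inter_comm, Real.volume_real_Icc_of_le hy.1] at e2
  linarith

lemma phi_ge_abs (τ x y : ℝ) (hτ : τ ∈ Set.Ioo (0 : ℝ) 1) (hx : x ∈ Set.Icc (0 : ℝ) 1)
    (hy : y ∈ Set.Icc (0 : ℝ) 1) : |x - y| ≤ phi τ x y := by
  rw [phi_eq τ x y hτ hx hy]
  have h1 : volume.real (rotS τ x ∩ Set.Icc 0 y) ≤ volume.real (rotS τ x) :=
    measureReal_mono inter_subset_left (rotS_fin τ x)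
  have h2 : volume.real (rotS τ x ∩ Set.Icc 0 y) ≤ volume.real (Set.Icc 0 y) :=
    measureReal_mono inter_subset_right (measure_Icc_lt_top).ne
  rw [rotS_vol τ x hτ hx] at h1
  rw [Real.volume_real_Icc_of_le hy.1] at h2
  rw [abs_le]; constructor <;> linarith

lemma phi_le (τ x y : ℝ) (hτ : τ ∈ Set.Ioo (0 : ℝ) 1) (hx : x ∈ Set.Icc (0 : ℝ) 1)
    (hy : y ∈ Set.Icc (0 : ℝ) 1) : phi τ x y ≤ x + y := by
  rw [phi_eq τ x y hτ hx hy]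
  have : 0 ≤ volume.real (rotS τ x ∩ Set.Icc 0 y) := measureReal_nonneg
  linarith

lemma phi_ge (τ x y : ℝ) (hτ : τ ∈ Set.Ioo (0 : ℝ) 1) (hx : x ∈ Set.Icc (0 : ℝ) 1)
    (hy : y ∈ Set.Icc (0 : ℝ) 1) :
    x + y - 2 * max (x - τ) 0 - 2 * max (y - (1 - τ)) 0 ≤ phi τ x y := by
  rw [phi_eq τ x y hτ hx hy]
  have h1 : rotS τ x ∩ Set.Icc 0 y ⊆ Set.Icc 0 (x - τ) ∪ Set.Icc (1 - τ) y := by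
    rintro z ⟨⟨_, h | h⟩, h'⟩
    · exact Or.inl ⟨h'.1, h.2⟩
    · exact Or.inr ⟨h.1, h'.2⟩
  have h2 : volume.real (rotS τ x ∩ Set.Icc 0 y) ≤ _ :=
    measureReal_mono h1 (measure_union_lt_top measure_Icc_lt_top measure_Icc_lt_top).ne
  have h3 := h2.trans (measureReal_union_le _ _)
  rw [Real.volume_real_Icc, Real.volume_real_Icc, sub_zero] at h3
  linarith

lemma var_four (L : ℝ) (v : ℝ → ℝ) (a b : ℝ) (hbv : BoundedVariationOn v (Set.Ioo 0 L))
    (ha : Tendsto v (nhdsWithin 0 (Set.Ioo 0 L)) (nhds a))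
    (hb : Tendsto v (nhdsWithin L (Set.Ioo 0 L)) (nhds b))
    (x y : ℝ) (hx : x ∈ Set.Ioo 0 L) (hy : y ∈ Set.Ioo 0 L) (hxy : x ≤ y) :
    |a - v x| + |v x - v y| + |v y - b| ≤ (eVariationOn v (Set.Ioo 0 L)).toReal := by
  have hL : 0 < L := hx.1.trans hx.2
  have key : ∀ p ∈ Set.Ioo 0 L, ∀ q ∈ Set.Ioo 0 L, p ≤ x → y ≤ q →
      |v p - v x| + |v x - v y| + |v y - v q| ≤ (eVariationOn v (Set.Ioo 0 L)).toReal := by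
    intro p hp q hq hpx hyq
    have e1 := eVariationOn.Icc_add_Icc v hpx hxy hx
    have e2 := eVariationOn.Icc_add_Icc v (hpx.trans hxy) hyq hy
    have i1 : edist (v p) (v x) ≤ eVariationOn v (Set.Ioo 0 L ∩ Set.Icc p x) :=
      eVariationOn.edist_le v ⟨hp, le_rfl, hpx⟩ ⟨hx, hpx, le_rfl⟩
    have i2 : edist (v x) (v y) ≤ eVariationOn v (Set.Ioo 0 L ∩ Set.Icc x y) :=
      eVariationOn.edist_le v ⟨hx, le_rfl, hxy⟩ ⟨hy, hxy, le_rfl⟩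
    have i3 : edist (v y) (v q) ≤ eVariationOn v (Set.Ioo 0 L ∩ Set.Icc y q) :=
      eVariationOn.edist_le v ⟨hy, le_rfl, hyq⟩ ⟨hq, hyq, le_rfl⟩
    have i4 : eVariationOn v (Set.Ioo 0 L ∩ Set.Icc p q) ≤ eVariationOn v (Set.Ioo 0 L) :=
      eVariationOn.mono v inter_subset_left
    rw [← e2, ← e1] at i4
    have i5 := (add_le_add (add_le_add i1 i2) i3).trans i4
    have := ENNReal.toReal_mono hbv i5
    rw [ENNReal.toReal_add (by finiteness) (by finiteness),
      ENNReal.toReal_add (by finiteness) (by finiteness)] at this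
    simpa [edist_dist, Real.dist_eq] using this
  have n0 : (nhdsWithin (0:ℝ) (Set.Ioo 0 L)).NeBot := by
    rw [nhdsWithin_Ioo_eq_nhdsGT hL]; infer_instance
  have nL : (nhdsWithin (L:ℝ) (Set.Ioo 0 L)).NeBot := by
    rw [nhdsWithin_Ioo_eq_nhdsLT hL]; infer_instance
  have step1 : ∀ q ∈ Set.Ioo 0 L, y ≤ q →
      |a - v x| + |v x - v y| + |v y - v q| ≤ (eVariationOn v (Set.Ioo 0 L)).toReal := by
    intro q hq hyq
    refine le_of_tendsto ((((ha.sub_const (v x)).abs).add_const _).add_const _) ?_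
    have h1 : ∀ᶠ p in nhdsWithin (0:ℝ) (Set.Ioo 0 L), p < x :=
      nhdsWithin_le_nhds (Iio_mem_nhds hx.1)
    filter_upwards [h1, self_mem_nhdsWithin] with p h2 h3
    exact key p h3 q hq h2.le hyq
  refine le_of_tendsto (((hb.const_sub (v y)).abs).const_add _) ?_
  have h1 : ∀ᶠ p in nhdsWithin (L:ℝ) (Set.Ioo 0 L), y < p :=
    nhdsWithin_le_nhds (Ioi_mem_nhds hy.2)
  filter_upwards [h1, self_mem_nhdsWithin] with p h2 h3
  exact step1 p h3 h2.le

lemma int_le (L T : ℝ) (w : ℝ → ℝ) (A : Set ℝ) (hA : A ⊆ Set.Ioo 0 L) (hT : 0 ≤ T)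
    (hw : IntegrableOn w (Set.Ioo 0 L)) (h1 : ∀ x ∈ A, w x ≤ T)
    (h2 : ∀ x ∈ Set.Ioo 0 L, x ∉ A → w x ≤ 0) :
    ∫ x in Set.Ioo 0 L, w x ≤ T * (volume A).toReal := by
  have hAf : volume A ≠ ⊤ := measure_ne_top_of_subset hA (measure_Ioo_lt_top).ne
  set B := toMeasurable volume A with hB
  have hBm : MeasurableSet B := measurableSet_toMeasurable _ _
  have hBv : volume B = volume A := measure_toMeasurable A
  have hi : IntegrableOn (B.indicator (fun _ => T)) (Set.Ioo 0 L) :=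
    (integrableOn_const (measure_Ioo_lt_top).ne).indicator hBm
  calc ∫ x in Set.Ioo 0 L, w x ≤ ∫ x in Set.Ioo 0 L, B.indicator (fun _ => T) x := by
        refine setIntegral_mono_on hw hi measurableSet_Ioo ?_
        intro x hx
        by_cases hxA : x ∈ A
        · rw [Set.indicator_of_mem (subset_toMeasurable _ _ hxA)]
          exact h1 x hxA
        · exact (h2 x hx hxA).trans (Set.indicator_nonneg (fun _ _ => hT) x)
    _ = (volume.real (Set.Ioo 0 L ∩ B)) * T := by
        rw [setIntegral_indicator hBm, setIntegral_const, smul_eq_mul]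
    _ ≤ T * (volume A).toReal := by
        rw [mul_comm]
        refine mul_le_mul_of_nonneg_left ?_ hT
        rw [← hBv]
        exact measureReal_mono inter_subset_right (hBv ▸ hAf)

lemma four_sqrt_le (c m T : ℝ) (hm : 0 ≤ m) (hT : 0 ≤ T) (h : c ≤ T * m) :
    4 * Real.sqrt c ≤ 2 * m + 2 * T := by
  have : Real.sqrt c ≤ (m + T) / 2 :=
    Real.sqrt_le_iff.mpr ⟨by linarith, by nlinarith [sq_nonneg (m - T)]⟩
  linarith

lemma lower_bound (τ σ L : ℝ)
    (hτ : τ ∈ Set.Ioo (0 : ℝ) 1) (hL0 : 0 < L) (hL : L ≤ min τ (1 - τ))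
    (hσ1 : 0 < σ) (hσ2 : σ < L) (v : ℝ → ℝ) (a b : ℝ) (hv : Adm L σ v)
    (ha : Tendsto v (nhdsWithin 0 (Set.Ioo 0 L)) (nhds a))
    (hb : Tendsto v (nhdsWithin L (Set.Ioo 0 L)) (nhds b)) :
    4 * Real.sqrt (σ * L) ≤ Fvol L v + phi τ a b := by
  obtain ⟨h01, hbv, hint⟩ := hv
  have hLτ : L ≤ τ := hL.trans (min_le_left _ _)
  have hLτ' : L ≤ 1 - τ := hL.trans (min_le_right _ _)
  have n0 : (nhdsWithin (0:ℝ) (Set.Ioo 0 L)).NeBot := by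
    rw [nhdsWithin_Ioo_eq_nhdsGT hL0]; infer_instance
  have nL : (nhdsWithin (L:ℝ) (Set.Ioo 0 L)).NeBot := by
    rw [nhdsWithin_Ioo_eq_nhdsLT hL0]; infer_instance
  have haI : a ∈ Set.Icc (0:ℝ) 1 := isClosed_Icc.mem_of_tendsto ha
    (by filter_upwards [self_mem_nhdsWithin] with x hx using h01 x hx)
  have hbI : b ∈ Set.Icc (0:ℝ) 1 := isClosed_Icc.mem_of_tendsto hb
    (by filter_upwards [self_mem_nhdsWithin] with x hx using h01 x hx)
  have hvi : IntegrableOn v (Set.Ioo 0 L) := by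
    by_contra h
    have := integral_undef h
    rw [hint] at this
    nlinarith [mul_pos hσ1 hL0]
  have hvar := var_four L v a b hbv ha hb
  have hp1 := phi_ge_abs τ a b hτ haI hbI
  have hp2 := phi_ge τ a b hτ haI hbI
  unfold Fvol
  set V := (eVariationOn v (Set.Ioo 0 L)).toReal with hV
  set A := {x ∈ Set.Ioo 0 L | 0 < v x ∧ v x < 1} with hA
  set P := phi τ a b with hP
  have hAs : A ⊆ Set.Ioo 0 L := fun x hx => hx.1
  have hm0 : 0 ≤ (volume A).toReal := ENNReal.toReal_nonneg
  obtain ⟨T, hT⟩ : ∃ T, T = (V + P) / 2 := ⟨_, rfl⟩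
  have hT0 : 0 ≤ T := by
    have : 0 ≤ V := ENNReal.toReal_nonneg
    have := (abs_nonneg _).trans hp1
    linarith
  have hgoal : ∀ c, σ * L ≤ c → c ≤ T * (volume A).toReal →
      4 * Real.sqrt (σ * L) ≤ 2 * (volume A).toReal + V + P := by
    intro c h1 h2
    have := four_sqrt_le (σ * L) (volume A).toReal T hm0 hT0 (h1.trans h2)
    linarith
  have hbig : 1 ≤ T → 4 * Real.sqrt (σ * L) ≤ 2 * (volume A).toReal + V + P := by
    intro h
    have : Real.sqrt (σ * L) ≤ L := Real.sqrt_le_iff.mpr ⟨hL0.le, by nlinarith⟩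
    linarith
  have hab : ∀ x ∈ Set.Ioo 0 L, ∀ y ∈ Set.Ioo 0 L, v x - v y ≤ T := by
    intro x hx y hy
    rcases le_total x y with h | h
    · have := hvar x y hx hy h
      linarith [le_abs_self (a - v x), neg_abs_le (a - v x), le_abs_self (v x - v y), neg_abs_le (v x - v y), le_abs_self (v y - b), neg_abs_le (v y - b), le_abs_self (a - b), neg_abs_le (a - b)]
    · have := hvar y x hy hx h
      linarith [le_abs_self (a - v y), neg_abs_le (a - v y), le_abs_self (v y - v x), neg_abs_le (v y - v x), le_abs_self (v x - b), neg_abs_le (v x - b), le_abs_self (a - b), neg_abs_le (a - b)]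
  have caseA : (∀ x ∈ Set.Ioo 0 L, v x ≤ T) →
      4 * Real.sqrt (σ * L) ≤ 2 * (volume A).toReal + V + P := by
    intro hall
    rcases le_or_gt 1 T with h | h
    · exact hbig h
    refine hgoal (∫ x in Set.Ioo 0 L, v x) hint.ge
      (int_le L T v A hAs hT0 hvi (fun x hx => hall x hx.1) ?_)
    intro x hx hxA
    by_contra hc
    exact hxA ⟨hx, not_le.mp hc, (hall x hx).trans_lt h⟩
  by_cases hz : ∃ y ∈ Set.Ioo 0 L, v y = 0
  · obtain ⟨y, hy, hy0⟩ := hz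
    exact caseA (fun x hx => by have := hab x hx y hy; linarith)
  have hpos : ∀ y ∈ Set.Ioo 0 L, 0 < v y := fun y hy =>
    lt_of_le_of_ne (h01 y hy).1 (fun h => hz ⟨y, hy, h.symm⟩)
  by_cases hsm : a ≤ τ ∧ b ≤ 1 - τ
  · apply caseA
    intro x hx
    have h1 := hvar x x hx hx le_rfl
    rw [max_eq_right (by linarith [hsm.1]), max_eq_right (by linarith [hsm.2])] at hp2
    linarith [le_abs_self (a - v x), neg_abs_le (a - v x), le_abs_self (v x - v x), neg_abs_le (v x - v x), le_abs_self (v x - b), neg_abs_le (v x - b)]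
  obtain ⟨y, hy, hyL⟩ : ∃ y ∈ Set.Ioo 0 L, v y < L := by
    by_contra! hc
    have : ∫ x in Set.Ioo 0 L, L ≤ ∫ x in Set.Ioo 0 L, v x :=
      setIntegral_mono_on (integrableOn_const (measure_Ioo_lt_top).ne) hvi measurableSet_Ioo hc
    rw [hint, setIntegral_const, Real.volume_real_Ioo_of_le hL0.le, smul_eq_mul] at this
    nlinarith
  have hTL : L ≤ T := by
    have h1 := hvar y y hy hy le_rfl
    rcases le_or_gt a τ with h2 | h2 <;> rcases le_or_gt b (1 - τ) with h3 | h3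
    · exact absurd ⟨h2, h3⟩ hsm
    · rw [max_eq_right (by linarith), max_eq_left (by linarith)] at hp2
      linarith [le_abs_self (a - v y), neg_abs_le (a - v y), le_abs_self (v y - v y), neg_abs_le (v y - v y), le_abs_self (v y - b), neg_abs_le (v y - b)]
    · rw [max_eq_left (by linarith), max_eq_right (by linarith)] at hp2
      linarith [le_abs_self (a - v y), neg_abs_le (a - v y), le_abs_self (v y - v y), neg_abs_le (v y - v y), le_abs_self (v y - b), neg_abs_le (v y - b)]
    · rw [max_eq_left (by linarith), max_eq_left (by linarith)] at hp2
      linarith [le_abs_self (a - v y), neg_abs_le (a - v y), le_abs_self (v y - v y), neg_abs_le (v y - v y), le_abs_self (v y - b), neg_abs_le (v y - b)]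
  by_cases h1 : ∃ x ∈ Set.Ioo 0 L, v x = 1
  · obtain ⟨x, hx, hx1⟩ := h1
    have hone : IntegrableOn (fun _ : ℝ => (1 : ℝ)) (Set.Ioo 0 L) :=
      integrableOn_const (measure_Ioo_lt_top).ne
    have e : ∫ x in Set.Ioo 0 L, (1 - v x) = L - σ * L := by
      rw [integral_sub hone hvi, hint, setIntegral_const,
        Real.volume_real_Ioo_of_le hL0.le, smul_eq_mul]
      ring
    refine hgoal (L - σ * L) (by nlinarith) ?_
    rw [← e]
    refine int_le L T (fun x => 1 - v x) A hAs hT0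
      (hone.sub hvi)
      (fun z hz => by have := hab x hx z hz.1; linarith) ?_
    intro z hz hzA
    by_contra hc
    exact hzA ⟨hz, hpos z hz, by linarith⟩
  · have hAe : A = Set.Ioo 0 L := by
      refine hAs.antisymm (fun x hx => ⟨hx, hpos x hx, ?_⟩)
      exact lt_of_le_of_ne (h01 x hx).2 (fun h => h1 ⟨x, hx, h⟩)
    have hAv : (volume A).toReal = L := by
      rw [hAe, Real.volume_Ioo, ENNReal.toReal_ofReal (by linarith)]; ring
    refine hgoal (L * L) (by nlinarith) ?_
    rw [hAv]
    nlinarith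

lemma anti_var (f : ℝ → ℝ) (s : Set ℝ) (a b : ℝ) (hf : AntitoneOn f s) (ha : a ∈ s)
    (hb : b ∈ s) : eVariationOn f (s ∩ Set.Icc a b) ≤ ENNReal.ofReal (f a - f b) := by
  have h1 : eVariationOn (fun x => -f x) (s ∩ Set.Icc a b) = eVariationOn f (s ∩ Set.Icc a b) := by
    simp only [eVariationOn, edist_neg_neg]
  have h2 : MonotoneOn (fun x => -f x) s := fun x hx y hy hxy => neg_le_neg (hf hx hy hxy)
  have h3 := (h2.eVariationOn_eq ha hb).le
  rw [h1] at h3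
  have h4 : -f b - -f a = f a - f b := by ring
  simp only [h4] at h3
  exact h3

lemma ind_var_left (s r L : ℝ) (hs : 0 ≤ s) (hr : 0 < r) :
    ∃ a, 0 ≤ a ∧ a ≤ r ∧ (∀ L, 0 < L → Tendsto (Set.indicator (Set.Ioo s (s + r)) (fun _ => r))
      (nhdsWithin 0 (Set.Ioo 0 L)) (nhds a)) ∧
      eVariationOn (Set.indicator (Set.Ioo s (s + r)) (fun _ => r)) (Set.Ioc 0 (s + r / 2))
        ≤ ENNReal.ofReal (r - a) := by
  rcases hs.eq_or_lt with h | h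
  · subst h
    refine ⟨r, hr.le, le_rfl, ?_, ?_⟩
    · intro L hL
      refine tendsto_const_nhds.congr' ?_
      have h1 : ∀ᶠ p in nhdsWithin (0:ℝ) (Set.Ioo 0 L), p < 0 + r :=
        nhdsWithin_le_nhds (Iio_mem_nhds (by linarith))
      filter_upwards [h1, self_mem_nhdsWithin] with x h1 h2
      rw [Set.indicator_of_mem (show x ∈ Set.Ioo 0 (0 + r) from ⟨h2.1, h1⟩)]
    · rw [eVariationOn.constant_on]
      · simp
      · rintro _ ⟨x, hx, rfl⟩ _ ⟨y, hy, rfl⟩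
        have hx' : x ∈ Set.Ioo 0 (0 + r) := ⟨hx.1, by linarith [hx.2]⟩
        have hy' : y ∈ Set.Ioo 0 (0 + r) := ⟨hy.1, by linarith [hy.2]⟩
        rw [Set.indicator_of_mem hx', Set.indicator_of_mem hy']
  · refine ⟨0, le_rfl, hr.le, ?_, ?_⟩
    · intro L hL
      refine tendsto_const_nhds.congr' ?_
      have h1 : ∀ᶠ p in nhdsWithin (0:ℝ) (Set.Ioo 0 L), p < s :=
        nhdsWithin_le_nhds (Iio_mem_nhds h)
      filter_upwards [h1] with x h1
      rw [Set.indicator_of_notMem (fun hx : x ∈ Set.Ioo s (s + r) => by linarith [hx.1])]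
    · have hmono : MonotoneOn (Set.indicator (Set.Ioo s (s + r)) (fun _ => r))
          (Set.Iic (s + r / 2)) := by
        intro x hx y hy hxy
        by_cases hxs : x ∈ Set.Ioo s (s + r)
        · have hys : y ∈ Set.Ioo s (s + r) :=
            ⟨hxs.1.trans_le hxy, by linarith [Set.mem_Iic.mp hy]⟩
          rw [Set.indicator_of_mem hxs, Set.indicator_of_mem hys]
        · rw [Set.indicator_of_notMem hxs]
          exact Set.indicator_nonneg (fun _ _ => hr.le) y
      have h2 := (hmono.eVariationOn_eq (a := 0) (b := s + r / 2)
        (Set.mem_Iic.mpr (by linarith)) (Set.mem_Iic.mpr le_rfl)).le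
      rw [Set.indicator_of_notMem (fun hx : (0:ℝ) ∈ Set.Ioo s (s + r) => by linarith [hx.1]),
        Set.indicator_of_mem (show s + r / 2 ∈ Set.Ioo s (s + r) from ⟨by linarith, by linarith⟩)] at h2
      rw [sub_zero] at h2 ⊢
      refine le_trans (eVariationOn.mono _ ?_) h2
      exact (fun x hx => ⟨hx.2, hx.1.le, hx.2⟩)

lemma ind_var_right (s r L : ℝ) (hs : s + r ≤ L) (hs0 : 0 ≤ s) (hr : 0 < r) :
    ∃ b, 0 ≤ b ∧ b ≤ r ∧ Tendsto (Set.indicator (Set.Ioo s (s + r)) (fun _ => r))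
      (nhdsWithin L (Set.Ioo 0 L)) (nhds b) ∧
      eVariationOn (Set.indicator (Set.Ioo s (s + r)) (fun _ => r)) (Set.Ico (s + r / 2) L)
        ≤ ENNReal.ofReal (r - b) := by
  rcases hs.eq_or_lt with h | h
  · subst h
    refine ⟨r, hr.le, le_rfl, ?_, ?_⟩
    · refine tendsto_const_nhds.congr' ?_
      have h1 : ∀ᶠ p in nhdsWithin (s + r) (Set.Ioo 0 (s + r)), s < p :=
        nhdsWithin_le_nhds (Ioi_mem_nhds (by linarith))
      filter_upwards [h1, self_mem_nhdsWithin] with x h1 h2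
      rw [Set.indicator_of_mem (show x ∈ Set.Ioo s (s + r) from ⟨h1, h2.2⟩)]
    · rw [eVariationOn.constant_on]
      · simp
      · rintro _ ⟨x, hx, rfl⟩ _ ⟨y, hy, rfl⟩
        have hx' : x ∈ Set.Ioo s (s + r) := ⟨by linarith [hx.1], hx.2⟩
        have hy' : y ∈ Set.Ioo s (s + r) := ⟨by linarith [hy.1], hy.2⟩
        rw [Set.indicator_of_mem hx', Set.indicator_of_mem hy']
  · refine ⟨0, le_rfl, hr.le, ?_, ?_⟩
    · refine tendsto_const_nhds.congr' ?_
      have h1 : ∀ᶠ p in nhdsWithin L (Set.Ioo 0 L), s + r < p :=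
        nhdsWithin_le_nhds (Ioi_mem_nhds h)
      filter_upwards [h1] with x h1
      rw [Set.indicator_of_notMem (fun hx : x ∈ Set.Ioo s (s + r) => by linarith [hx.2])]
    · have hanti : AntitoneOn (Set.indicator (Set.Ioo s (s + r)) (fun _ => r))
          (Set.Ici (s + r / 2)) := by
        intro x hx y hy hxy
        by_cases hys : y ∈ Set.Ioo s (s + r)
        · have hxs : x ∈ Set.Ioo s (s + r) :=
            ⟨by linarith [Set.mem_Ici.mp hx], hxy.trans_lt hys.2⟩
          rw [Set.indicator_of_mem hxs, Set.indicator_of_mem hys]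
        · rw [Set.indicator_of_notMem hys]
          exact Set.indicator_nonneg (fun _ _ => hr.le) x
      have h2 := anti_var _ _ (s + r / 2) L hanti
        (Set.mem_Ici.mpr le_rfl) (Set.mem_Ici.mpr (by linarith))
      rw [Set.indicator_of_notMem (fun hx : L ∈ Set.Ioo s (s + r) => by linarith [hx.2]),
        Set.indicator_of_mem (show s + r / 2 ∈ Set.Ioo s (s + r) from ⟨by linarith, by linarith⟩)] at h2
      rw [sub_zero] at h2 ⊢
      refine le_trans (eVariationOn.mono _ ?_) h2
      exact (fun x hx => ⟨hx.1, hx.1, hx.2.le⟩)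

/-- Periodic minimum problem in small domains with small volume fraction:
for `0 < L ≤ min{τ,1−τ}` and `0 < σ < L` the least value of
`E^#_τ(v) = Fvol L v + φ_τ(v(0⁺), v(L⁻))` over `Adm(L,σ)` is `4√(σL)`, attained by
`v = √(σL)·χ_{(s, s+√(σL))}` for any `0 ≤ s ≤ L − √(σL)`. -/
theorem periodic_min_small_domain_small_fraction (τ σ L : ℝ)
    (hτ : τ ∈ Set.Ioo (0 : ℝ) 1) (hL0 : 0 < L) (hL : L ≤ min τ (1 - τ))
    (hσ1 : 0 < σ) (hσ2 : σ < L) :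
    (∀ v : ℝ → ℝ, ∀ a b : ℝ, Adm L σ v →
        Tendsto v (nhdsWithin 0 (Set.Ioo 0 L)) (nhds a) →
        Tendsto v (nhdsWithin L (Set.Ioo 0 L)) (nhds b) →
        4 * Real.sqrt (σ * L) ≤ Fvol L v + phi τ a b) ∧
    (∀ s : ℝ, 0 ≤ s → s ≤ L - Real.sqrt (σ * L) →
      Adm L σ (Set.indicator (Set.Ioo s (s + Real.sqrt (σ * L)))
          (fun _ => Real.sqrt (σ * L))) ∧
      ∃ a b : ℝ,
        Tendsto (Set.indicator (Set.Ioo s (s + Real.sqrt (σ * L)))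
            (fun _ => Real.sqrt (σ * L)))
          (nhdsWithin 0 (Set.Ioo 0 L)) (nhds a) ∧
        Tendsto (Set.indicator (Set.Ioo s (s + Real.sqrt (σ * L)))
            (fun _ => Real.sqrt (σ * L)))
          (nhdsWithin L (Set.Ioo 0 L)) (nhds b) ∧
        Fvol L (Set.indicator (Set.Ioo s (s + Real.sqrt (σ * L)))
            (fun _ => Real.sqrt (σ * L))) + phi τ a b = 4 * Real.sqrt (σ * L)) := by
  refine ⟨fun v a b hv ha hb => lower_bound τ σ L hτ hL0 hL hσ1 hσ2 v a b hv ha hb, ?_⟩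
  intro s hs0 hs1
  have hLτ : L ≤ τ := hL.trans (min_le_left _ _)
  have hLτ' : L ≤ 1 - τ := hL.trans (min_le_right _ _)
  have hr0 : 0 < Real.sqrt (σ * L) := Real.sqrt_pos.mpr (mul_pos hσ1 hL0)
  have hrr : Real.sqrt (σ * L) * Real.sqrt (σ * L) = σ * L :=
    Real.mul_self_sqrt (mul_pos hσ1 hL0).le
  have hlow := lower_bound τ σ L hτ hL0 hL hσ1 hσ2
  generalize Real.sqrt (σ * L) = r at *
  obtain ⟨a, ha0, har, hat, hav⟩ := ind_var_left s r L hs0 hr0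
  obtain ⟨b, hb0, hbr, hbt, hbv⟩ := ind_var_right s r L (by linarith) hs0 hr0
  have hr1 : r < 1 := by linarith
  have hsub : Set.Ioo s (s + r) ⊆ Set.Ioo 0 L :=
    Set.Ioo_subset_Ioo hs0 (by linarith)
  have hU : Set.Ioc 0 (s + r / 2) ∪ Set.Ico (s + r / 2) L = Set.Ioo 0 L :=
    Set.Ioc_union_Ico_eq_Ioo (by linarith) (by linarith)
  have hun := eVariationOn.union (Set.indicator (Set.Ioo s (s + r)) (fun _ => r))
    (isGreatest_Ioc (a := (0:ℝ)) (b := s + r / 2) (by linarith))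
    (isLeast_Ico (show s + r / 2 < L by linarith))
  rw [hU] at hun
  have hvle : eVariationOn (Set.indicator (Set.Ioo s (s + r)) (fun _ => r)) (Set.Ioo 0 L)
      ≤ ENNReal.ofReal ((r - a) + (r - b)) := by
    rw [hun, ENNReal.ofReal_add (by linarith) (by linarith)]
    exact add_le_add hav hbv
  have hadm : Adm L σ (Set.indicator (Set.Ioo s (s + r)) (fun _ => r)) := by
    refine ⟨?_, (hvle.trans_lt ENNReal.ofReal_lt_top).ne, ?_⟩
    · intro x _
      refine ⟨Set.indicator_nonneg (fun _ _ => hr0.le) x, ?_⟩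
      exact Set.indicator_le' (f := fun _ => r) (g := fun _ => (1:ℝ)) (fun _ _ => hr1.le)
        (fun _ _ => zero_le_one) x
    · rw [setIntegral_indicator measurableSet_Ioo, Set.inter_eq_right.mpr hsub,
        setIntegral_const, Real.volume_real_Ioo_of_le (by linarith), smul_eq_mul, ← hrr]
      ring
  refine ⟨hadm, a, b, hat L hL0, hbt, le_antisymm ?_ (hlow _ a b hadm (hat L hL0) hbt)⟩
  have h1 := phi_le τ a b hτ ⟨ha0, by linarith⟩ ⟨hb0, by linarith⟩
  have h2 := ENNReal.toReal_mono ENNReal.ofReal_ne_top hvle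
  rw [ENNReal.toReal_ofReal (by linarith)] at h2
  have h3 : (volume {x ∈ Set.Ioo 0 L | 0 < Set.indicator (Set.Ioo s (s + r)) (fun _ => r) x ∧
      Set.indicator (Set.Ioo s (s + r)) (fun _ => r) x < 1}).toReal ≤ r := by
    have h4 : {x ∈ Set.Ioo 0 L | 0 < Set.indicator (Set.Ioo s (s + r)) (fun _ => r) x ∧
      Set.indicator (Set.Ioo s (s + r)) (fun _ => r) x < 1} ⊆ Set.Ioo s (s + r) := by
      rintro x ⟨_, hx, _⟩
      by_contra hc
      rw [Set.indicator_of_notMem hc] at hx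
      exact lt_irrefl _ hx
    have h5 := measureReal_mono (μ := volume) h4 (measure_Ioo_lt_top).ne
    rw [Real.volume_real_Ioo_of_le (by linarith)] at h5
    have h6 : s + r - s = r := by ring
    rw [h6] at h5
    exact h5
  unfold Fvol
  linarith
end
end

section
/- Periodic minimum problem, intermediate-size domains, intermediate volume fraction: let τ ∈ [0,1], write τ_* = min{τ,1−τ} and τ^* = max{τ,1−τ}, and assume τ_* ≤ L ≤ τ^* and (L+τ_*)²/(4L) ≤ σ ≤ 1 − (L+τ_*)²/(4L). Then 2L + 2τ_* is the least element of the set of values E^{#}_τ(v) as v ranges over Adm(L,σ): every v ∈ Adm(L,σ) satisfies E^{#}_τ(v) ≥ 2L + 2τ_*, and the constant function v ≡ σ attains this value. -/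
open MeasureTheory Filter Set

noncomputable section

noncomputable def II (τ a b : ℝ) : ℝ := max 0 (min (a-τ) b) + max 0 (min a (b-1+τ))
lemma II_a (τ a c b : ℝ) (_h0:0≤τ) (_h1:τ≤1) (_hb:0≤b)(hb:b≤1) (ha:0≤a)(hac:a≤c)(hc:c≤1): 0 ≤ II τ c b - II τ a b ∧ II τ c b - II τ a b ≤ c - a := by
  unfold II
  constructor
  · have : min (a-τ) b ≤ min (c-τ) b := by gcongr
    have : min (a) (b-1+τ) ≤ min c (b-1+τ) := by gcongr
    have : max 0 (min (a-τ) b) ≤ max 0 (min (c-τ) b) := by gcongr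
    have : max 0 (min (a) (b-1+τ)) ≤ max 0 (min c (b-1+τ)) := by gcongr
    linarith
  · grind
lemma II_b (τ a c b : ℝ) (_h0:0≤τ) (_h1:τ≤1) (_hb:0≤b)(hb:b≤1) (ha:0≤a)(hac:a≤c)(hc:c≤1): 0 ≤ II τ b c - II τ b a ∧ II τ b c - II τ b a ≤ c - a := by
  unfold II
  constructor
  · have : min (b-τ) a ≤ min (b-τ) c := by gcongr
    have : min b (a-1+τ) ≤ min b (c-1+τ) := by gcongr
    have : max 0 (min (b-τ) a) ≤ max 0 (min (b-τ) c) := by gcongr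
    have : max 0 (min b (a-1+τ)) ≤ max 0 (min b (c-1+τ)) := by gcongr
    linarith
  · grind
lemma II_le (τ a b : ℝ) (h0:0≤τ) (h1:τ≤1) (hb:0≤b)(hb:b≤1) (ha:0≤a)(hc:a≤1): II τ a b ≤ a ∧ II τ a b ≤ b := by
  unfold II
  constructor <;> grind
lemma II_s (τ s : ℝ) (h0:0≤τ) (h1:τ≤1) (h : min τ (1-τ) ≤ s) (h' : s ≤ 1 - min τ (1-τ)) : II τ s s = s - min τ (1-τ) := by
  unfold II
  grind
lemma vol_arc (τ a p q : ℝ) (_h0:0≤τ) (_h1:τ≤1) (_ha:0≤a)(ha1:a≤1) :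
    volume.real (Icc p q ∩ (Icc (-τ) (a - τ) ∪ Icc (1 - τ) (a + 1 - τ))) =
      max 0 (min q (a-τ) - max p (-τ)) + max 0 (min q (a+1-τ) - max p (1-τ)) := by
  rw [inter_union_distrib_left]
  have h := measureReal_union_add_inter (μ := volume) (s := Icc p q ∩ Icc (-τ) (a - τ))
    (t := Icc p q ∩ Icc (1 - τ) (a + 1 - τ)) (by measurability)
    (by rw [Icc_inter_Icc]; exact measure_Icc_lt_top.ne)
    (by rw [Icc_inter_Icc]; exact measure_Icc_lt_top.ne)
  have h2 : volume.real (Icc p q ∩ Icc (-τ) (a - τ) ∩ (Icc p q ∩ Icc (1 - τ) (a + 1 - τ))) = 0 := by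
    simp only [Icc_inter_Icc, Real.volume_real_Icc]
    apply max_eq_right
    simp only [max_def, min_def]
    grind
  rw [h2, add_zero] at h
  rw [h]
  simp only [Icc_inter_Icc, Real.volume_real_Icc]
  rw [max_comm, max_comm 0 (min q (a + 1 - τ) - _)]

lemma phi_eq_s18 (τ a b : ℝ) (h0:0≤τ) (h1:τ≤1) (ha:0≤a)(ha1:a≤1) (hb:0≤b)(hb1:b≤1) :
    phi τ a b = a + b - 2 * II τ a b := by
  have e1 := vol_arc τ a 0 1 h0 h1 ha ha1
  have e2 := vol_arc τ a 0 b h0 h1 ha ha1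
  unfold phi
  rw [inter_symmDiff_distrib_left]
  set S := (Icc (-τ) (a - τ) ∪ Icc (1 - τ) (a + 1 - τ)) with hS
  have hSm : MeasurableSet S := by measurability
  have hb' : Icc (0:ℝ) 1 ∩ Icc 0 b = Icc 0 b := by
    rw [Icc_inter_Icc]; simp [hb1]
  rw [hb']
  have f1 : volume (Icc (0:ℝ) 1 ∩ S) ≠ ⊤ :=
    ((measure_mono inter_subset_left).trans_lt measure_Icc_lt_top).ne
  have f2 : volume (Icc (0:ℝ) b) ≠ ⊤ := measure_Icc_lt_top.ne
  have g := measureReal_symmDiff_eq (μ := volume) (s := Icc (0:ℝ) 1 ∩ S) (t := Icc 0 b)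
    (measurableSet_Icc.inter hSm) measurableSet_Icc f1 f2
  have g1 := measureReal_inter_add_sdiff (μ := volume) (s := Icc (0:ℝ) 1 ∩ S) (t := Icc 0 b)
    measurableSet_Icc f1
  have g2 := measureReal_inter_add_sdiff (μ := volume) (s := Icc 0 b) (t := Icc (0:ℝ) 1 ∩ S)
    (measurableSet_Icc.inter hSm) f2
  have k1 : Icc (0:ℝ) b ∩ (Icc (0:ℝ) 1 ∩ S) = Icc 0 b ∩ S := by
    rw [← inter_assoc, inter_comm (Icc 0 b), hb']
  rw [inter_comm (Icc (0:ℝ) 1 ∩ S), k1] at g1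
  rw [k1] at g2
  rw [measureReal_def] at g
  rw [g]
  have k3 : volume.real (Icc (0:ℝ) b) = b := by simp [hb]
  unfold II
  have k4 : volume.real (Icc (0:ℝ) 1 ∩ S) = a := by
    rw [e1]; grind
  have k5 : volume.real (Icc (0:ℝ) b ∩ S) = max 0 (min (a-τ) b) + max 0 (min a (b-1+τ)) := by
    rw [e2]; grind
  linarith

lemma phi_lip (τ a b c d : ℝ) (h0:0≤τ) (h1:τ≤1) (ha:0≤a)(ha1:a≤1) (hb:0≤b)(hb1:b≤1)
    (hc:0≤c)(hc1:c≤1) (hd:0≤d)(hd1:d≤1) :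
    phi τ c d ≤ phi τ a b + |a - c| + |d - b| := by
  rw [phi_eq_s18 τ a b h0 h1 ha ha1 hb hb1, phi_eq_s18 τ c d h0 h1 hc hc1 hd hd1]
  have A : |c - a - 2 * (II τ c b - II τ a b)| ≤ |a - c| := by
    rcases le_total a c with h | h
    · have := II_a τ a c b h0 h1 hb hb1 ha h hc1
      grind
    · have := II_a τ c a b h0 h1 hb hb1 hc h ha1
      grind
  have B : |d - b - 2 * (II τ c d - II τ c b)| ≤ |d - b| := by
    rcases le_total b d with h | h
    · have := II_b τ b d c h0 h1 hc hc1 hb h hd1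
      grind
    · have := II_b τ d b c h0 h1 hc hc1 hd h hb1
      grind
  have := le_abs_self (c - a - 2 * (II τ c b - II τ a b))
  have := le_abs_self (d - b - 2 * (II τ c d - II τ c b))
  linarith

lemma phi_ge_s18 (τ a b : ℝ) (h0:0≤τ) (h1:τ≤1) (ha:0≤a)(ha1:a≤1) (hb:0≤b)(hb1:b≤1) :
    |a - b| ≤ phi τ a b := by
  rw [phi_eq_s18 τ a b h0 h1 ha ha1 hb hb1]
  have := II_le τ a b h0 h1 hb hb1 ha ha1
  rw [abs_le]
  constructor <;> linarith

lemma phi_s (τ s : ℝ) (h0:0≤τ) (h1:τ≤1) (h : min τ (1-τ) ≤ s) (h' : s ≤ 1 - min τ (1-τ)) :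
    phi τ s s = 2 * min τ (1-τ) := by
  have : 0 ≤ min τ (1-τ) := le_min h0 (by linarith)
  rw [phi_eq_s18 τ s s h0 h1 (by linarith) (by linarith) (by linarith) (by linarith),
    II_s τ s h0 h1 h h']
  ring

lemma var_ge3 {v : ℝ → ℝ} {S : Set ℝ} (hv : BoundedVariationOn v S) {p x y q : ℝ}
    (hp : p ∈ S) (hx : x ∈ S) (hy : y ∈ S) (hq : q ∈ S) (h1 : p ≤ x) (h2 : x ≤ y) (h3 : y ≤ q) :
    |v p - v x| + |v x - v y| + |v y - v q| ≤ (eVariationOn v S).toReal := by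
  have A : eVariationOn v (S ∩ Icc p x) + eVariationOn v (S ∩ Icc x y) +
      eVariationOn v (S ∩ Icc y q) ≤ eVariationOn v S := by
    rw [eVariationOn.Icc_add_Icc v h1 h2 hx, eVariationOn.Icc_add_Icc v (h1.trans h2) h3 hy]
    exact eVariationOn.mono v inter_subset_left
  have B1 := eVariationOn.edist_le v (s := S ∩ Icc p x) (x := p) (y := x)
    ⟨hp, le_rfl, h1⟩ ⟨hx, h1, le_rfl⟩
  have B2 := eVariationOn.edist_le v (s := S ∩ Icc x y) (x := x) (y := y)
    ⟨hx, le_rfl, h2⟩ ⟨hy, h2, le_rfl⟩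
  have B3 := eVariationOn.edist_le v (s := S ∩ Icc y q) (x := y) (y := q)
    ⟨hy, le_rfl, h3⟩ ⟨hq, h3, le_rfl⟩
  have C := (add_le_add (add_le_add B1 B2) B3).trans A
  simp only [edist_dist, Real.dist_eq] at C
  rw [← ENNReal.ofReal_add (by positivity) (by positivity),
    ← ENNReal.ofReal_add (by positivity) (by positivity)] at C
  exact (ENNReal.ofReal_le_iff_le_toReal hv).1 C

lemma var_lim {v : ℝ → ℝ} {L a b : ℝ} (hL : 0 < L) (hv : BoundedVariationOn v (Ioo 0 L))
    (ha : Tendsto v (nhdsWithin 0 (Set.Ioo 0 L)) (nhds a))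
    (hb : Tendsto v (nhdsWithin L (Set.Ioo 0 L)) (nhds b)) {x y : ℝ}
    (hx : x ∈ Ioo 0 L) (hy : y ∈ Ioo 0 L) (h2 : x ≤ y) :
    |a - v x| + |v x - v y| + |v y - b| ≤ (eVariationOn v (Ioo 0 L)).toReal := by
  have : (nhdsWithin 0 (Set.Ioo 0 L)).NeBot := left_nhdsWithin_Ioo_neBot hL
  have : (nhdsWithin L (Set.Ioo 0 L)).NeBot := right_nhdsWithin_Ioo_neBot hL
  have hp : ∀ᶠ p in nhdsWithin 0 (Set.Ioo 0 L), p ∈ Ioo 0 L ∧ p ≤ x := by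
    filter_upwards [self_mem_nhdsWithin, mem_nhdsWithin_of_mem_nhds (Iio_mem_nhds hx.1)] with p h h'
    exact ⟨h, le_of_lt h'⟩
  have hq : ∀ᶠ p in nhdsWithin L (Set.Ioo 0 L), p ∈ Ioo 0 L ∧ y ≤ p := by
    filter_upwards [self_mem_nhdsWithin, mem_nhdsWithin_of_mem_nhds (Ioi_mem_nhds hy.2)] with p h h'
    exact ⟨h, le_of_lt h'⟩
  have s1 : ∀ p, (p ∈ Ioo 0 L ∧ p ≤ x) →
      |v p - v x| + |v x - v y| + |v y - b| ≤ (eVariationOn v (Ioo 0 L)).toReal := by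
    intro p hp
    have T : Tendsto (fun q => |v p - v x| + |v x - v y| + |v y - v q|)
        (nhdsWithin L (Set.Ioo 0 L)) (nhds (|v p - v x| + |v x - v y| + |v y - b|)) :=
      tendsto_const_nhds.add ((tendsto_const_nhds.sub hb).abs)
    exact le_of_tendsto T (hq.mono fun q hq => var_ge3 hv hp.1 hx hy hq.1 hp.2 h2 hq.2)
  have T : Tendsto (fun p => |v p - v x| + |v x - v y| + |v y - b|)
      (nhdsWithin 0 (Set.Ioo 0 L)) (nhds (|a - v x| + |v x - v y| + |v y - b|)) :=
    (((ha.sub tendsto_const_nhds).abs).add tendsto_const_nhds).add tendsto_const_nhds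
  exact le_of_tendsto T (hp.mono s1)

lemma exists_big {f : ℝ → ℝ} {L m : ℝ} {G : Set ℝ} (hf0 : ∀ x ∈ Ioo 0 L, 0 ≤ f x)
    (hi : IntegrableOn f (Ioo 0 L)) (hm : ∫ x in Ioo 0 L, f x = m) (hm0 : 0 < m)
    (hG : G = {x ∈ Ioo 0 L | 0 < f x}) :
    0 < volume.real G ∧ ∃ y ∈ G, m ≤ f y * volume.real G := by
  have hsub : G ⊆ Ioo 0 L := by rw [hG]; exact sep_subset _ _
  have hGm : volume G ≠ ⊤ := ((measure_mono hsub).trans_lt measure_Ioo_lt_top).ne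
  have hint : ∫ x in G, f x = m := by
    rw [← hm]
    symm
    refine setIntegral_eq_of_subset_of_ae_sdiff_eq_zero measurableSet_Ioo.nullMeasurableSet hsub
      (Eventually.of_forall ?_)
    intro x hx
    rw [hG] at hx
    by_contra h
    exact hx.2 ⟨hx.1, lt_of_le_of_ne (hf0 x hx.1) (Ne.symm h)⟩
  have hG0 : volume G ≠ 0 := by
    intro h
    rw [setIntegral_measure_zero _ h] at hint
    linarith
  have hpos : 0 < volume.real G := ENNReal.toReal_pos hG0 hGm
  refine ⟨hpos, ?_⟩
  obtain ⟨y, hy, h⟩ := exists_setAverage_le hG0 hGm (hi.mono_set hsub)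
  refine ⟨y, hy, ?_⟩
  rw [setAverage_eq, hint, smul_eq_mul, inv_mul_le_iff₀ hpos] at h
  linarith

lemma amgm (L t s g y : ℝ) (hL : 0 < L) (ht : 0 ≤ t) (hs : (L + t) ^ 2 / (4 * L) ≤ s)
    (hg : 0 < g) (h : s * L ≤ y * g) : L + t ≤ g + y := by
  rw [div_le_iff₀ (by positivity)] at hs
  have hy : 0 < y := by
    by_contra hy
    have : 0 < (L+t)^2 := by positivity
    nlinarith
  apply le_of_sq_le_sq _ (by positivity)
  nlinarith [sq_nonneg (g - y)]

/-- Periodic minimum problem in intermediate-size domains with intermediate volume fraction: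
writing `τ_* = min{τ,1−τ}` and `τ^* = max{τ,1−τ}`, for `τ_* ≤ L ≤ τ^*` and
`(L+τ_*)²/(4L) ≤ σ ≤ 1 − (L+τ_*)²/(4L)` the least value of
`E^#_τ(v) = Fvol L v + φ_τ(v(0⁺), v(L⁻))` over `Adm(L,σ)` is `2L + 2τ_*`, attained by
the constant function `v ≡ σ`. -/
theorem periodic_min_intermediate_domain (τ σ L : ℝ)
    (hτ : τ ∈ Set.Icc (0 : ℝ) 1) (hL0 : 0 < L)
    (hL1 : min τ (1 - τ) ≤ L) (hL2 : L ≤ max τ (1 - τ))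
    (hσ1 : (L + min τ (1 - τ)) ^ 2 / (4 * L) ≤ σ)
    (hσ2 : σ ≤ 1 - (L + min τ (1 - τ)) ^ 2 / (4 * L)) :
    (∀ v : ℝ → ℝ, ∀ a b : ℝ, Adm L σ v →
        Tendsto v (nhdsWithin 0 (Set.Ioo 0 L)) (nhds a) →
        Tendsto v (nhdsWithin L (Set.Ioo 0 L)) (nhds b) →
        2 * L + 2 * min τ (1 - τ) ≤ Fvol L v + phi τ a b) ∧
    (Adm L σ (fun _ => σ) ∧
      Fvol L (fun _ => σ) + phi τ σ σ = 2 * L + 2 * min τ (1 - τ)) := by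
  obtain ⟨h0, h1⟩ := hτ
  have ht0 : 0 ≤ min τ (1 - τ) := le_min h0 (by linarith)
  have hmm : max τ (1 - τ) = 1 - min τ (1 - τ) := by grind
  have hp := phi_s τ σ h0 h1
  rw [hmm] at hL2
  set t := min τ (1 - τ) with htdef
  have hts : t ≤ (L + t) ^ 2 / (4 * L) := by
    rw [le_div_iff₀ (by positivity)]
    nlinarith [sq_nonneg (L - t)]
  have hspos : 0 < (L + t) ^ 2 / (4 * L) := by positivity
  have hσ0 : 0 < σ := by linarith
  have hσ1' : σ < 1 := by linarith
  specialize hp (by linarith) (by linarith)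
  refine ⟨?_, ⟨?_, ?_, ?_⟩, ?_⟩
  · rintro v a b ⟨hv01, hbv, hint⟩ ha hb
    have : (nhdsWithin 0 (Set.Ioo 0 L)).NeBot := left_nhdsWithin_Ioo_neBot hL0
    have : (nhdsWithin L (Set.Ioo 0 L)).NeBot := right_nhdsWithin_Ioo_neBot hL0
    have a0 : 0 ≤ a := ge_of_tendsto ha (eventually_nhdsWithin_of_forall fun x hx => (hv01 x hx).1)
    have a1 : a ≤ 1 := le_of_tendsto ha (eventually_nhdsWithin_of_forall fun x hx => (hv01 x hx).2)
    have b0 : 0 ≤ b := ge_of_tendsto hb (eventually_nhdsWithin_of_forall fun x hx => (hv01 x hx).1)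
    have b1 : b ≤ 1 := le_of_tendsto hb (eventually_nhdsWithin_of_forall fun x hx => (hv01 x hx).2)
    have key : ∀ x ∈ Ioo 0 L, ∀ y ∈ Ioo 0 L, x ≤ y →
        |v x - v y| + phi τ (v x) (v y) ≤ (eVariationOn v (Ioo 0 L)).toReal + phi τ a b := by
      intro x hx y hy hxy
      have A := var_lim hL0 hbv ha hb hx hy hxy
      have B := phi_lip τ a b (v x) (v y) h0 h1 a0 a1 b0 b1 (hv01 x hx).1 (hv01 x hx).2
        (hv01 y hy).1 (hv01 y hy).2
      linarith
    have key1 : ∀ x ∈ Ioo 0 L, ∀ y ∈ Ioo 0 L,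
        2 * (v y - v x) ≤ (eVariationOn v (Ioo 0 L)).toReal + phi τ a b := by
      intro x hx y hy
      rcases le_total x y with h | h
      · have A := key x hx y hy h
        have B := phi_ge_s18 τ (v x) (v y) h0 h1 (hv01 x hx).1 (hv01 x hx).2 (hv01 y hy).1 (hv01 y hy).2
        have := neg_abs_le (v x - v y)
        linarith
      · have A := key y hy x hx h
        have B := phi_ge_s18 τ (v y) (v x) h0 h1 (hv01 y hy).1 (hv01 y hy).2 (hv01 x hx).1 (hv01 x hx).2
        have := le_abs_self (v y - v x)
        linarith
    have key2 : ∀ x ∈ Ioo 0 L, ∀ y ∈ Ioo 0 L, v x ≤ σ → σ ≤ v y →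
        2 * t ≤ (eVariationOn v (Ioo 0 L)).toReal + phi τ a b := by
      intro x hx y hy hxs hys
      rcases le_total x y with h | h
      · have A := key x hx y hy h
        have B := phi_lip τ (v x) (v y) σ σ h0 h1 (hv01 x hx).1 (hv01 x hx).2
          (hv01 y hy).1 (hv01 y hy).2 hσ0.le hσ1'.le hσ0.le hσ1'.le
        rw [abs_of_nonpos (by linarith)] at A
        rw [abs_of_nonpos (by linarith), abs_of_nonpos (by linarith)] at B
        linarith
      · have A := key y hy x hx h
        have B := phi_lip τ (v y) (v x) σ σ h0 h1 (hv01 y hy).1 (hv01 y hy).2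
          (hv01 x hx).1 (hv01 x hx).2 hσ0.le hσ1'.le hσ0.le hσ1'.le
        rw [abs_of_nonneg (by linarith)] at A
        rw [abs_of_nonneg (by linarith), abs_of_nonneg (by linarith)] at B
        linarith
    have hi : IntegrableOn v (Ioo 0 L) := by
      by_contra h
      rw [integral_undef h] at hint
      have : 0 < σ * L := by positivity
      linarith
    have hvolI : volume.real (Ioo 0 L) = L := by simp [hL0.le]
    have hi' : IntegrableOn (fun x => 1 - v x) (Ioo 0 L) :=
      (integrableOn_const (by simp)).sub hi
    have hint' : ∫ x in Ioo 0 L, (1 - v x) = (1 - σ) * L := by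
      rw [integral_sub (integrable_const (1:ℝ)) hi, hint]
      rw [setIntegral_const, hvolI]
      simp; ring
    unfold Fvol
    rw [← measureReal_def]
    have hnn := measureReal_nonneg (μ := volume) (s := {x ∈ Set.Ioo 0 L | 0 < v x ∧ v x < 1})
    by_cases hO : ∃ y ∈ Ioo 0 L, v y = 1
    · obtain ⟨y, hy, hy1⟩ := hO
      by_cases hZ : ∃ x ∈ Ioo 0 L, v x = 0
      · obtain ⟨x, hx, hx0⟩ := hZ
        have := key1 x hx y hy
        rw [hx0, hy1] at this
        linarith
      · push Not at hZ
        obtain ⟨g0, x, hx, hxm⟩ := exists_big (f := fun x => 1 - v x) (m := (1 - σ) * L)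
          (G := {x ∈ Set.Ioo 0 L | 0 < v x ∧ v x < 1})
          (fun x hx => by linarith [(hv01 x hx).2]) hi' hint'
          (mul_pos (by linarith) hL0) (by
            ext x
            simp only [mem_ofPred_eq]
            constructor
            · rintro ⟨h, h2, h3⟩; exact ⟨h, by linarith⟩
            · rintro ⟨h, h2⟩
              exact ⟨h, lt_of_le_of_ne (hv01 x h).1 (hZ x h).symm, by linarith⟩)
        have := key1 x hx.1 y hy
        have := amgm L t (1 - σ) _ _ hL0 ht0 (by linarith) g0 hxm
        linarith
    · push Not at hO
      obtain ⟨g0, y, hy, hym⟩ := exists_big (f := v) (m := σ * L)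
          (G := {x ∈ Set.Ioo 0 L | 0 < v x ∧ v x < 1})
          (fun x hx => (hv01 x hx).1) hi hint
          (mul_pos (by linarith) hL0) (by
            ext x
            simp only [mem_ofPred_eq]
            constructor
            · rintro ⟨h, h2, h3⟩; exact ⟨h, by linarith⟩
            · rintro ⟨h, h2⟩
              exact ⟨h, h2, lt_of_le_of_ne (hv01 x h).2 (hO x h)⟩)
      by_cases hZ : ∃ x ∈ Ioo 0 L, v x = 0
      · obtain ⟨x, hx, hx0⟩ := hZ
        have := key1 x hx y hy.1
        have := amgm L t σ _ _ hL0 ht0 hσ1 g0 hym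
        linarith
      · push Not at hZ
        have hGe : {x ∈ Set.Ioo 0 L | 0 < v x ∧ v x < 1} = Ioo 0 L := by
          ext x
          simp only [mem_ofPred_eq]
          constructor
          · exact fun h => h.1
          · exact fun h => ⟨h, lt_of_le_of_ne (hv01 x h).1 (hZ x h).symm,
              lt_of_le_of_ne (hv01 x h).2 (hO x h)⟩
        have hyI := hy.1
        rw [hGe, hvolI] at hym
        rw [hGe, hvolI]
        have hys : σ ≤ v y := le_of_mul_le_mul_right hym hL0
        obtain ⟨x, hx, hxs⟩ := exists_le_setAverage (μ := volume) (s := Ioo 0 L) (f := v)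
          (by simp [hL0]) (by simp) hi
        rw [setAverage_eq, hint, smul_eq_mul, hvolI] at hxs
        have hxs' : v x ≤ σ := by
          have : L⁻¹ * (σ * L) = σ := by field_simp
          linarith
        have := key2 x hx y hyI hxs' hys
        linarith
  · exact fun x _ => ⟨hσ0.le, hσ1'.le⟩
  · rw [BoundedVariationOn, eVariationOn.constant_on (by
      rintro _ ⟨_, _, rfl⟩ _ ⟨_, _, rfl⟩; rfl)]
    exact ENNReal.zero_ne_top
  · rw [setIntegral_const]
    simp [hL0.le, mul_comm]
  · unfold Fvol
    rw [eVariationOn.constant_on (by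
      rintro _ ⟨_, _, rfl⟩ _ ⟨_, _, rfl⟩; rfl)]
    rw [hp]
    simp [hσ0, hσ1']
    change volume.real (Ioo 0 L) = L
    simp [hL0.le]
end
end

section
/- Periodic minimum problem, intermediate-size domains, small volume fraction: let τ ∈ [0,1], write τ_* = min{τ,1−τ} and τ^* = max{τ,1−τ}, and assume τ_* ≤ L ≤ τ^* and 0 < σ < (L+τ_*)²/(4L). Then 4√(σL) is the least element of the set of values E^{#}_τ(v) as v ranges over Adm(L,σ): every v ∈ Adm(L,σ) satisfies E^{#}_τ(v) ≥ 4√(σL), and the function v = √(σL)·χ_{(s, s+√(σL))} attains this value for any 0 ≤ s ≤ L − √(σL). -/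
open MeasureTheory Filter Set

noncomputable section

/-- Variation bound through the two one-sided limits. -/
lemma aux_var {L a b : ℝ} {v : ℝ → ℝ} (hL0 : 0 < L)
    (hbv : BoundedVariationOn v (Set.Ioo 0 L))
    (ha : Tendsto v (nhdsWithin 0 (Set.Ioo 0 L)) (nhds a))
    (hb : Tendsto v (nhdsWithin L (Set.Ioo 0 L)) (nhds b))
    {x y : ℝ} (hx : x ∈ Set.Ioo 0 L) (hy : y ∈ Set.Ioo 0 L) (hxy : x ≤ y) :
    |a - v x| + |v x - v y| + |v y - b| ≤ (eVariationOn v (Set.Ioo 0 L)).toReal := by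
  have n0 : (nhdsWithin (0:ℝ) (Set.Ioo 0 L)).NeBot := by
    rw [← mem_closure_iff_nhdsWithin_neBot, closure_Ioo hL0.ne]
    exact ⟨le_rfl, hL0.le⟩
  have nL : (nhdsWithin (L:ℝ) (Set.Ioo 0 L)).NeBot := by
    rw [← mem_closure_iff_nhdsWithin_neBot, closure_Ioo hL0.ne]
    exact ⟨hL0.le, le_rfl⟩
  have key : ∀ s ∈ Set.Ioo 0 L, ∀ t ∈ Set.Ioo 0 L, s ≤ x → y ≤ t →
      |v s - v x| + |v x - v y| + |v y - v t| ≤ (eVariationOn v (Set.Ioo 0 L)).toReal := by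
    intro s hs t ht hsx hyt
    have h1 : edist (v s) (v x) ≤ eVariationOn v {s, x} :=
      eVariationOn.edist_le v (by simp) (by simp)
    have h2 : edist (v x) (v y) ≤ eVariationOn v {x, y} :=
      eVariationOn.edist_le v (by simp) (by simp)
    have h3 : edist (v y) (v t) ≤ eVariationOn v {y, t} :=
      eVariationOn.edist_le v (by simp) (by simp)
    have h12 := eVariationOn.add_le_union v (s := {s, x}) (t := {x, y}) (by
      rintro p (rfl | rfl) q (rfl | rfl) <;> linarith)
    have h123 := eVariationOn.add_le_union v (s := {s, x} ∪ {x, y}) (t := {y, t}) (by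
      rintro p ((rfl | rfl) | (rfl | rfl)) q (rfl | rfl) <;> linarith)
    have h4 : eVariationOn v ({s, x} ∪ {x, y} ∪ {y, t}) ≤ eVariationOn v (Set.Ioo 0 L) := by
      apply eVariationOn.mono
      rintro p (((rfl | rfl) | (rfl | rfl)) | (rfl | rfl)) <;> assumption
    have h5 : edist (v s) (v x) + edist (v x) (v y) + edist (v y) (v t)
        ≤ eVariationOn v (Set.Ioo 0 L) :=
      (add_le_add ((add_le_add h1 h2).trans h12) h3).trans (h123.trans h4)
    have h6 := ENNReal.toReal_mono hbv h5
    rw [ENNReal.toReal_add (by simp [edist_ne_top]) (edist_ne_top _ _),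
      ENNReal.toReal_add (edist_ne_top _ _) (edist_ne_top _ _)] at h6
    simpa [edist_dist, Real.dist_eq, ENNReal.toReal_ofReal] using h6
  have key2 : ∀ t ∈ Set.Ioo 0 L, y ≤ t →
      |a - v x| + |v x - v y| + |v y - v t| ≤ (eVariationOn v (Set.Ioo 0 L)).toReal := by
    intro t ht hyt
    have hT : Tendsto (fun s => |v s - v x| + |v x - v y| + |v y - v t|)
        (nhdsWithin 0 (Set.Ioo 0 L)) (nhds (|a - v x| + |v x - v y| + |v y - v t|)) :=
      (((ha.sub_const _).abs).add_const _).add_const _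
    refine le_of_tendsto hT ?_
    filter_upwards [self_mem_nhdsWithin, nhdsWithin_le_nhds (Iio_mem_nhds hx.1)] with s hs hs'
    exact key s hs t ht (le_of_lt hs') hyt
  have hT : Tendsto (fun t => |a - v x| + |v x - v y| + |v y - v t|)
      (nhdsWithin L (Set.Ioo 0 L)) (nhds (|a - v x| + |v x - v y| + |v y - b|)) :=
    ((hb.const_sub _).abs).const_add _
  refine le_of_tendsto hT ?_
  filter_upwards [self_mem_nhdsWithin, nhdsWithin_le_nhds (Ioi_mem_nhds hy.2)] with t ht ht'
  exact key2 t ht (le_of_lt ht')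

/-- Bounds on the boundary term. -/
lemma aux_phi {τ a b : ℝ} (hτ : τ ∈ Set.Icc (0 : ℝ) 1) (ha : a ∈ Set.Icc (0 : ℝ) 1)
    (hb : b ∈ Set.Icc (0 : ℝ) 1) :
    |a - b| ≤ phi τ a b ∧ phi τ a b ≤ a + b ∧
      a + b - 2 * (max (b - (1 - τ)) 0 + max (a - τ) 0) ≤ phi τ a b := by
  obtain ⟨t0, t1⟩ := hτ
  obtain ⟨a0, a1⟩ := ha
  obtain ⟨b0, b1⟩ := hb
  set A : Set ℝ := Set.Icc (0:ℝ) 1 ∩ (Set.Icc (-τ) (a - τ) ∪ Set.Icc (1 - τ) (a + 1 - τ)) with hA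
  set B : Set ℝ := Set.Icc (0:ℝ) b with hB
  have hphi : phi τ a b = volume.real (A \ B ∪ B \ A) := by
    unfold phi Measure.real
    congr 2
    ext x
    simp only [hA, hB, Set.mem_inter_iff, Set.mem_union, Set.mem_sdiff, Set.mem_symmDiff,
      Set.mem_Icc]
    constructor
    · rintro ⟨h1, h2⟩
      tauto
    · rintro (h | h)
      · tauto
      · have : x ≤ 1 := h.1.2.trans b1
        tauto
  have hAm : MeasurableSet A := by measurability
  have hBm : MeasurableSet B := measurableSet_Icc
  have hAf : volume A ≠ ⊤ :=
    ((measure_mono Set.inter_subset_left).trans_lt (measure_Icc_lt_top (a := (0:ℝ)) (b := 1))).ne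
  have hBf : volume B ≠ ⊤ := (measure_Icc_lt_top (a := (0:ℝ)) (b := b)).ne
  have hBv : volume.real B = b := by simp [hB, Measure.real, b0]
  have hAv : volume.real A = a := by
    have e : A =ᵐ[volume] (Set.Ico 0 (a - τ) ∪ Set.Icc (1 - τ) (min 1 (a + 1 - τ)) : Set ℝ) := by
      have hne : ∀ᵐ x ∂(volume : Measure ℝ), x ≠ a - τ := by
        simp [ae_iff]
      filter_upwards [hne] with x hx
      apply propext
      change x ∈ A ↔ x ∈ (Set.Ico 0 (a - τ) ∪ Set.Icc (1 - τ) (min 1 (a + 1 - τ)) : Set ℝ)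
      simp only [hA, Set.mem_inter_iff, Set.mem_union, Set.mem_Icc, Set.mem_Ico, le_min_iff]
      constructor
      · rintro ⟨⟨h1, h2⟩, h | h⟩
        · exact Or.inl ⟨h1, lt_of_le_of_ne h.2 hx⟩
        · exact Or.inr ⟨h.1, h2, h.2⟩
      · rintro (h | h)
        · exact ⟨⟨h.1, by linarith [h.2]⟩, Or.inl ⟨by linarith [h.1], h.2.le⟩⟩
        · exact ⟨⟨by linarith [h.1], h.2.1⟩, Or.inr ⟨h.1, h.2.2⟩⟩
    have d : Disjoint (Set.Ico 0 (a - τ)) (Set.Icc (1 - τ) (min 1 (a + 1 - τ))) := by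
      rw [Set.disjoint_left]
      intro x h1 h2
      linarith [h1.2, h2.1]
    rw [measureReal_congr e, measureReal_union d measurableSet_Icc (by simp) (by simp)]
    rw [Real.volume_real_Ico, Real.volume_real_Icc]
    rcases le_total a τ with h | h
    · rw [min_eq_right (by linarith), max_eq_right (by linarith), max_eq_left (by linarith)]
      ring
    · rw [min_eq_left (by linarith), max_eq_left (by linarith), max_eq_left (by linarith)]
      ring
  have hI : volume.real (A ∩ B) ≤ max (b - (1 - τ)) 0 + max (a - τ) 0 := by
    have hs : A ∩ B ⊆ Set.Icc (1 - τ) b ∪ Set.Icc 0 (a - τ) := by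
      rintro x ⟨⟨h1, h | h⟩, h2⟩
      · exact Or.inr ⟨h1.1, h.2⟩
      · exact Or.inl ⟨h.1, h2.2⟩
    refine (measureReal_mono hs (by simp)).trans ?_
    refine (measureReal_union_le _ _).trans ?_
    rw [Real.volume_real_Icc, Real.volume_real_Icc]
    simp
  have hd : volume.real (A \ B ∪ B \ A) = volume.real (A \ B) + volume.real (B \ A) := by
    refine measureReal_union ?_ (hBm.diff hAm) ?_ ?_
    · rw [Set.disjoint_left]
      intro x h1 h2
      exact h2.2 h1.1
    · exact measure_ne_top_of_subset Set.sdiff_subset hAf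
    · exact measure_ne_top_of_subset Set.sdiff_subset hBf
  have e1 : volume.real (A ∩ B) + volume.real (A \ B) = volume.real A :=
    measureReal_inter_add_sdiff hBm hAf
  have e2 : volume.real (B ∩ A) + volume.real (B \ A) = volume.real B :=
    measureReal_inter_add_sdiff hAm hBf
  rw [Set.inter_comm] at e2
  have p1 : 0 ≤ volume.real (A \ B) := measureReal_nonneg
  have p2 : 0 ≤ volume.real (B \ A) := measureReal_nonneg
  have p3 : 0 ≤ volume.real (A ∩ B) := measureReal_nonneg
  rw [hphi, hd]
  refine ⟨?_, by linarith, by linarith⟩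
  rw [abs_le]
  constructor <;> linarith

/-- AM-GM in the form used below. -/
lemma aux_amgm {r x y : ℝ} (hx : 0 ≤ x) (hy : 0 ≤ y) (h : r ^ 2 ≤ x * y) :
    4 * r ≤ 2 * x + 2 * y := by
  have : 2 * r ≤ x + y := abs_le_of_sq_le_sq' (by nlinarith [sq_nonneg (x - y)]) (by linarith) |>.2
  linarith

/-- Algebra of the positive, non-saturated case. -/
lemma aux_alg {r L t T a b q : ℝ} (hL0 : 0 < L) (ht : 0 ≤ t) (htL : t ≤ L) (hLT : L ≤ T)
    (hT : t + T = 1) (hr : 2 * r < L + t) (hr0 : 0 < r) (hq0 : 0 ≤ q)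
    (h1 : max (b - T) 0 + max (a - t) 0 ≤ 0 → r ^ 2 ≤ L * q)
    (h2 : a - (max (b - T) 0 + max (a - t) 0) ≤ q)
    (h3 : b - (max (b - T) 0 + max (a - t) 0) ≤ q)
    (h4 : L * (a + b - (max (b - T) 0 + max (a - t) 0) - q) ≤ r ^ 2) :
    4 * r ≤ 2 * L + 2 * q := by
  rcases le_total b T with hb | hb <;> rcases le_total a t with ha | ha
  · rw [max_eq_right (by linarith), max_eq_right (by linarith)] at *
    exact aux_amgm hL0.le hq0 (h1 (by simp))
  · rw [max_eq_right (by linarith), max_eq_left (by linarith)] at *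
    linarith
  · rw [max_eq_left (by linarith), max_eq_right (by linarith)] at *
    linarith
  · rw [max_eq_left (by linarith), max_eq_left (by linarith)] at *
    have h5 : L * (1 - q) ≤ r ^ 2 := by
      have : a + b - (b - T + (a - t)) - q = 1 - q := by linarith
      rwa [this] at h4
    have h6 : 4 * r ^ 2 ≤ (L + t) ^ 2 := by nlinarith
    have h7 : L * (2 * r) ≤ L * (L + t) := by nlinarith
    have h8 : L * (2 * r) ≤ L * (L + q) := by
      have : t * t ≤ t * L := by nlinarith
      have : L * (L + 7 * t) ≤ L * 4 := by nlinarith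
      nlinarith
    have := le_of_mul_le_mul_left h8 hL0
    linarith

/-- The lower bound. -/
lemma aux_lower (τ r L : ℝ)
    (hτ : τ ∈ Set.Icc (0 : ℝ) 1) (hL0 : 0 < L)
    (hL1 : min τ (1 - τ) ≤ L) (hL2 : L ≤ max τ (1 - τ))
    (hr0 : 0 < r) (hr : 2 * r < L + min τ (1 - τ)) (v : ℝ → ℝ) (a b : ℝ)
    (hv : ∀ x ∈ Set.Ioo 0 L, 0 ≤ v x ∧ v x ≤ 1)
    (hbv : BoundedVariationOn v (Set.Ioo 0 L))
    (hint : (∫ x in Set.Ioo 0 L, v x) = r ^ 2)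
    (ha : Tendsto v (nhdsWithin 0 (Set.Ioo 0 L)) (nhds a))
    (hb : Tendsto v (nhdsWithin L (Set.Ioo 0 L)) (nhds b)) :
    4 * r ≤ Fvol L v + phi τ a b := by
  have hsum : min τ (1 - τ) + max τ (1 - τ) = 1 := by
    rw [min_add_max]; ring
  have ht0 : 0 ≤ min τ (1 - τ) := le_min hτ.1 (by linarith [hτ.2])
  set S : Set ℝ := {x ∈ Set.Ioo 0 L | 0 < v x ∧ v x < 1} with hS
  set m : ℝ := (volume S).toReal with hm
  set V : ℝ := (eVariationOn v (Set.Ioo 0 L)).toReal with hV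
  set O : ℝ := max (b - (1 - τ)) 0 + max (a - τ) 0 with hO
  have hE : Fvol L v = 2 * m + V := rfl
  have n0 : (nhdsWithin (0:ℝ) (Set.Ioo 0 L)).NeBot := by
    rw [← mem_closure_iff_nhdsWithin_neBot, closure_Ioo hL0.ne]
    exact ⟨le_rfl, hL0.le⟩
  have nL : (nhdsWithin (L:ℝ) (Set.Ioo 0 L)).NeBot := by
    rw [← mem_closure_iff_nhdsWithin_neBot, closure_Ioo hL0.ne]
    exact ⟨hL0.le, le_rfl⟩
  have ha01 : a ∈ Set.Icc (0:ℝ) 1 := isClosed_Icc.mem_of_tendsto ha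
    (eventually_mem_nhdsWithin.mono fun x hx => hv x hx)
  have hb01 : b ∈ Set.Icc (0:ℝ) 1 := isClosed_Icc.mem_of_tendsto hb
    (eventually_mem_nhdsWithin.mono fun x hx => hv x hx)
  obtain ⟨p1, -, p3⟩ := aux_phi hτ ha01 hb01
  rw [← hO] at p3
  set φ := phi τ a b with hφ
  have hvar : ∀ x ∈ Set.Ioo 0 L, ∀ y ∈ Set.Ioo 0 L, x ≤ y →
      |a - v x| + |v x - v y| + |v y - b| ≤ V := fun x hx y hy h =>
    aux_var hL0 hbv ha hb hx hy h
  have hm0 : 0 ≤ m := ENNReal.toReal_nonneg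
  have hosc : ∀ x ∈ Set.Ioo 0 L, ∀ y ∈ Set.Ioo 0 L, v y - v x ≤ (V + φ) / 2 := by
    intro x hx y hy
    rcases le_total x y with h | h
    · have := hvar x hx y hy h
      have c1 := le_abs_self (a - v x)
      have c2 := neg_abs_le (v x - v y)
      have c3 := le_abs_self (v y - b)
      have c4 := neg_abs_le (a - b)
      linarith
    · have := hvar y hy x hx h
      have c1 := neg_abs_le (a - v y)
      have c2 := le_abs_self (v y - v x)
      have c3 := neg_abs_le (v x - b)
      have c4 := le_abs_self (a - b)
      linarith
  have hq0 : 0 ≤ (V + φ) / 2 := by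
    have := hosc (L / 2) ⟨by linarith, by linarith⟩ (L / 2) ⟨by linarith, by linarith⟩
    linarith
  set q := (V + φ) / 2 with hq
  suffices 4 * r ≤ 2 * m + 2 * q by rw [hE]; linarith
  have hvi : IntegrableOn v (Set.Ioo 0 L) := by
    by_contra h
    rw [integral_undef h] at hint
    nlinarith
  have hSsub : S ⊆ Set.Ioo 0 L := fun x hx => hx.1
  have hSf : volume S ≠ ⊤ := measure_ne_top_of_subset hSsub (by simp)
  set S' := toMeasurable volume S with hS'
  have hS'm : MeasurableSet S' := measurableSet_toMeasurable _ _
  have hS'v : volume.real S' = m := by simp [hS', hm, Measure.real]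
  have hSS' : S ⊆ S' := subset_toMeasurable _ _
  have hS'f : volume S' ≠ ⊤ := by rw [hS', measure_toMeasurable]; exact hSf
  have hind : ∀ c : ℝ, IntegrableOn (S'.indicator fun _ => c) (Set.Ioo 0 L) := fun c =>
    (integrableOn_const (by simp)).indicator hS'm
  have hindI : ∀ c : ℝ, 0 ≤ c → (∫ x in Set.Ioo 0 L, S'.indicator (fun _ => c) x) ≤ c * m := by
    intro c hc
    rw [integral_indicator hS'm, Measure.restrict_restrict hS'm, setIntegral_const, smul_eq_mul,
      mul_comm]
    refine mul_le_mul_of_nonneg_left ?_ hc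
    rw [← hS'v]
    exact measureReal_mono Set.inter_subset_left hS'f
  have hbnd : ∀ c : ℝ, (∀ x ∈ Set.Ioo 0 L, c ≤ v x) → L * c ≤ r ^ 2 := by
    intro c hc
    have := setIntegral_mono_on (μ := volume) (integrableOn_const (C := c) (by simp)) hvi
      measurableSet_Ioo hc
    rw [hint, setIntegral_const] at this
    simpa [Measure.real, hL0.le] using this
  -- if the deficit is covered by `q` then we are done
  have hcov : (∀ x ∈ Set.Ioo 0 L, v x ≤ S'.indicator (fun _ => q) x) → 4 * r ≤ 2 * m + 2 * q := by
    intro h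
    have := setIntegral_mono_on (μ := volume) hvi (hind q) measurableSet_Ioo h
    rw [hint] at this
    exact aux_amgm hm0 hq0 (by linarith [hindI q hq0])
  by_cases hone : ∃ y ∈ Set.Ioo 0 L, v y = 1
  · obtain ⟨y, hy, hy1⟩ := hone
    by_cases hzero : ∃ x ∈ Set.Ioo 0 L, v x = 0
    · obtain ⟨x, hx, hx0⟩ := hzero
      have := hosc x hx y hy
      linarith
    · push Not at hzero
      have hle : ∀ x ∈ Set.Ioo 0 L, 1 - S'.indicator (fun _ => q) x ≤ v x := by
        intro x hx
        by_cases hxS : x ∈ S'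
        · rw [Set.indicator_of_mem hxS]
          have := hosc x hx y hy
          linarith
        · rw [Set.indicator_of_notMem hxS]
          by_contra hlt
          push Not at hlt
          exact hxS (hSS' ⟨hx, lt_of_le_of_ne (hv x hx).1 (hzero x hx).symm, by linarith⟩)
      have h1 := setIntegral_mono_on (μ := volume)
        (Integrable.sub (integrableOn_const (C := (1:ℝ)) (by simp)) (hind q)) hvi
        measurableSet_Ioo hle
      have h0 : IntegrableOn (fun _ : ℝ => (1:ℝ)) (Set.Ioo 0 L) := integrableOn_const (by simp)
      rw [integral_sub' h0 (hind q), hint, setIntegral_const] at h1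
      have h2 : volume.real (Set.Ioo 0 L) = L := by simp [Measure.real, hL0.le]
      rw [h2, smul_eq_mul, mul_one] at h1
      refine aux_amgm hm0 hq0 ?_
      have h3 := hindI q hq0
      have h4 : 2 * r ^ 2 ≤ L := by
        have : (2 * r) ^ 2 ≤ (L + min τ (1 - τ)) ^ 2 := by
          apply pow_le_pow_left₀ (by linarith) hr.le
        nlinarith
      linarith
  · push Not at hone
    by_cases hzero : ∃ x ∈ Set.Ioo 0 L, v x = 0
    · obtain ⟨x, hx, hx0⟩ := hzero
      apply hcov
      intro y hy
      by_cases hyS : y ∈ S'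
      · rw [Set.indicator_of_mem hyS]
        have := hosc x hx y hy
        linarith
      · rw [Set.indicator_of_notMem hyS]
        by_contra hlt
        push Not at hlt
        exact hyS (hSS' ⟨hy, hlt, lt_of_le_of_ne (hv y hy).2 (hone y hy)⟩)
    · push Not at hzero
      have hSe : S = Set.Ioo 0 L := Set.Subset.antisymm hSsub fun x hx =>
        ⟨hx, lt_of_le_of_ne (hv x hx).1 (hzero x hx).symm, lt_of_le_of_ne (hv x hx).2 (hone x hx)⟩
      have hmL : m = L := by rw [hm, hSe]; simp [hL0.le]
      have hmid : (L / 2) ∈ Set.Ioo 0 L := ⟨by linarith, by linarith⟩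
      have c := hvar (L / 2) hmid (L / 2) hmid le_rfl
      have c0 := abs_nonneg (v (L / 2) - v (L / 2))
      have c1 := le_abs_self (a - v (L / 2))
      have c2 := neg_abs_le (a - v (L / 2))
      have c3 := le_abs_self (v (L / 2) - b)
      have c4 := neg_abs_le (v (L / 2) - b)
      have g1 : O ≤ 0 → r ^ 2 ≤ L * q := by
        intro hO0
        have h : ∀ x ∈ Set.Ioo 0 L, v x ≤ q := by
          intro x hx
          have d := hvar x hx x hx le_rfl
          have d0 := abs_nonneg (v x - v x)
          have d1 := neg_abs_le (a - v x)
          have d2 := le_abs_self (v x - b)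
          linarith
        have := setIntegral_mono_on (μ := volume) hvi (integrableOn_const (C := q) (by simp))
          measurableSet_Ioo h
        rw [hint, setIntegral_const] at this
        simpa [Measure.real, hL0.le] using this
      have g2 : a - O ≤ q := by linarith
      have g3 : b - O ≤ q := by linarith
      have g4 : L * (a + b - O - q) ≤ r ^ 2 := by
        apply hbnd
        intro x hx
        have d := hvar x hx x hx le_rfl
        have d0 := abs_nonneg (v x - v x)
        have d1 := le_abs_self (a - v x)
        have d2 := neg_abs_le (v x - b)
        linarith
      rw [hmL]
      rcases le_total τ (1 - τ) with h | h
      · rw [min_eq_left h] at *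
        rw [max_eq_right h] at *
        exact aux_alg hL0 ht0 hL1 hL2 hsum hr hr0 hq0 g1 g2 g3 g4
      · rw [min_eq_right h] at *
        rw [max_eq_left h] at *
        rw [hO, add_comm (max (b - (1 - τ)) 0)] at g1 g2 g3 g4
        rw [add_comm a b] at g4
        exact aux_alg hL0 ht0 hL1 hL2 hsum hr hr0 hq0 g1 g3 g2 g4

/-- The competitor attains the value. -/
lemma aux_attain (τ r L s : ℝ)
    (hτ : τ ∈ Set.Icc (0 : ℝ) 1) (hL0 : 0 < L) (hr0 : 0 < r) (hrL : r < L) (hr1 : r ≤ 1)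
    (hs0 : 0 ≤ s) (hs1 : s ≤ L - r) (v : ℝ → ℝ)
    (hv : v = Set.indicator (Set.Ioo s (s + r)) (fun _ => r)) :
    (∀ x ∈ Set.Ioo 0 L, 0 ≤ v x ∧ v x ≤ 1) ∧
    BoundedVariationOn v (Set.Ioo 0 L) ∧
    (∫ x in Set.Ioo 0 L, v x) = r ^ 2 ∧
    ∃ a b : ℝ, Tendsto v (nhdsWithin 0 (Set.Ioo 0 L)) (nhds a) ∧
      Tendsto v (nhdsWithin L (Set.Ioo 0 L)) (nhds b) ∧
      Fvol L v + phi τ a b ≤ 4 * r := by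
  have hin : ∀ x, s < x → x < s + r → v x = r := by
    intro x h1 h2
    rw [hv, Set.indicator_of_mem (show x ∈ Set.Ioo s (s + r) from ⟨h1, h2⟩)]
  have hl : ∀ x, x ≤ s → v x = 0 := by
    intro x h1
    rw [hv, Set.indicator_of_notMem]
    intro h; linarith [h.1]
  have hrr : ∀ x, s + r ≤ x → v x = 0 := by
    intro x h1
    rw [hv, Set.indicator_of_notMem]
    intro h; linarith [h.2]
  have hcase : ∀ x, v x = 0 ∨ v x = r := by
    intro x
    rcases le_or_gt x s with h | h
    · exact Or.inl (hl x h)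
    rcases lt_or_ge x (s + r) with h' | h'
    · exact Or.inr (hin x h h')
    · exact Or.inl (hrr x h')
  have h01 : ∀ x, 0 ≤ v x ∧ v x ≤ r := by
    intro x
    rcases hcase x with h | h <;> rw [h] <;> constructor <;> linarith
  set c := s + r / 2 with hc
  have hcL : c ∈ Set.Ioo 0 L := ⟨by linarith, by linarith⟩
  have hvc : v c = r := hin c (by linarith) (by linarith)
  have hmono : MonotoneOn v (Set.Iic c) := by
    intro x hx y hy hxy
    rcases le_or_gt x s with h | h
    · rw [hl x h]; exact (h01 y).1
    · have hy' : y ≤ c := hy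
      rw [hin y (by linarith) (by linarith)]; exact (h01 x).2
  have hanti : AntitoneOn v (Set.Ici c) := by
    intro x hx y hy hxy
    rcases le_or_gt (s + r) y with h | h
    · rw [hrr y h]; exact (h01 x).1
    · have hx' : c ≤ x := hx
      rw [hin x (by linarith) (by linarith)]; exact (h01 y).2
  have hleft : ∃ a : ℝ, 0 ≤ a ∧ a ≤ r ∧ (a = 0 ∨ s = 0) ∧
      Tendsto v (nhdsWithin 0 (Set.Ioo 0 L)) (nhds a) ∧
      eVariationOn v (Set.Ioc 0 c) ≤ ENNReal.ofReal (r - a) := by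
    rcases hs0.eq_or_lt with h | h
    · refine ⟨r, hr0.le, le_rfl, Or.inr h.symm, ?_, ?_⟩
      · refine tendsto_const_nhds.congr' ?_
        filter_upwards [self_mem_nhdsWithin, nhdsWithin_le_nhds (Iio_mem_nhds hr0)] with x hx hx'
        have : x < r := hx'
        exact (hin x (by linarith [hx.1]) (by linarith)).symm
      · rw [eVariationOn.constant_on]
        · simp
        · rintro _ ⟨x, hx, rfl⟩ _ ⟨y, hy, rfl⟩
          rw [hin x (by linarith [hx.1]) (by linarith [hx.2]),
            hin y (by linarith [hy.1]) (by linarith [hy.2])]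
    · refine ⟨0, le_rfl, hr0.le, Or.inl rfl, ?_, ?_⟩
      · refine tendsto_const_nhds.congr' ?_
        filter_upwards [nhdsWithin_le_nhds (Iio_mem_nhds h)] with x hx
        exact (hl x (le_of_lt hx)).symm
      · have h1 := (hmono.eVariationOn_eq (a := 0) (b := c) hcL.1.le (le_refl c)).le
        rw [hvc, hl 0 hs0] at h1
        refine (eVariationOn.mono v ?_).trans h1
        intro x hx
        exact ⟨hx.2, hx.1.le, hx.2⟩
  have hright : ∃ b : ℝ, 0 ≤ b ∧ b ≤ r ∧ (b = 0 ∨ s + r = L) ∧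
      Tendsto v (nhdsWithin L (Set.Ioo 0 L)) (nhds b) ∧
      eVariationOn v (Set.Ico c L) ≤ ENNReal.ofReal (r - b) := by
    rcases (show s + r ≤ L by linarith).eq_or_lt with h | h
    · refine ⟨r, hr0.le, le_rfl, Or.inr h, ?_, ?_⟩
      · refine tendsto_const_nhds.congr' ?_
        filter_upwards [self_mem_nhdsWithin,
          nhdsWithin_le_nhds (Ioi_mem_nhds (show s < L by linarith))] with x hx hx'
        exact (hin x hx' (by linarith [hx.2])).symm
      · rw [eVariationOn.constant_on]
        · simp
        · rintro _ ⟨x, hx, rfl⟩ _ ⟨y, hy, rfl⟩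
          rw [hin x (by linarith [hx.1]) (by linarith [hx.2]),
            hin y (by linarith [hy.1]) (by linarith [hy.2])]
    · refine ⟨0, le_rfl, hr0.le, Or.inl rfl, ?_, ?_⟩
      · refine tendsto_const_nhds.congr' ?_
        filter_upwards [nhdsWithin_le_nhds (Ioi_mem_nhds h)] with x hx
        exact (hrr x (le_of_lt hx)).symm
      · have hneg : MonotoneOn (fun x => - v x) (Set.Ici c) := hanti.neg
        have h1 := (hneg.eVariationOn_eq (a := c) (b := L) (le_refl c) hcL.2.le).le
        have h2 : ∀ t : Set ℝ, eVariationOn (fun x => - v x) t = eVariationOn v t := by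
          intro t
          simp only [eVariationOn, edist_neg_neg]
        rw [h2, hvc, hrr L h.le, show -(0:ℝ) - -r = r - 0 by ring] at h1
        refine (eVariationOn.mono v ?_).trans h1
        intro x hx
        exact ⟨hx.1, hx.1, hx.2.le⟩
  obtain ⟨a, a0, ar, ha, hat, hav⟩ := hleft
  obtain ⟨b, b0, br, hb, hbt, hbv⟩ := hright
  have hU : eVariationOn v (Set.Ioo 0 L) ≤ ENNReal.ofReal (r - a + (r - b)) := by
    have : Set.Ioo 0 L = Set.Ioc 0 c ∪ Set.Ico c L := by
      rw [Set.Ioc_union_Ico_eq_Ioo hcL.1 hcL.2]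
    have g1 : IsGreatest (Set.Ioc 0 c) c := ⟨⟨hcL.1, le_rfl⟩, fun x hx => hx.2⟩
    have g2 : IsLeast (Set.Ico c L) c := ⟨⟨le_rfl, hcL.2⟩, fun x hx => hx.1⟩
    rw [this, eVariationOn.union v g1 g2, ENNReal.ofReal_add (by linarith) (by linarith)]
    exact add_le_add hav hbv
  refine ⟨fun x _ => ⟨(h01 x).1, (h01 x).2.trans hr1⟩, ?_, ?_, a, b, hat, hbt, ?_⟩
  · exact (hU.trans_lt ENNReal.ofReal_lt_top).ne
  · rw [hv, integral_indicator measurableSet_Ioo, Measure.restrict_restrict measurableSet_Ioo,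
      Set.inter_eq_left.mpr (Set.Ioo_subset_Ioo hs0 (by linarith)), setIntegral_const]
    simp [Measure.real, hr0.le, sq]
  · have h1 := ENNReal.toReal_mono ENNReal.ofReal_ne_top hU
    rw [ENNReal.toReal_ofReal (by linarith)] at h1
    have h2 := (aux_phi hτ (a := a) (b := b) ⟨a0, ar.trans hr1⟩ ⟨b0, br.trans hr1⟩).2.1
    have h3 : (volume {x ∈ Set.Ioo 0 L | 0 < v x ∧ v x < 1}).toReal ≤ r := by
      have hs : {x ∈ Set.Ioo 0 L | 0 < v x ∧ v x < 1} ⊆ Set.Ioo s (s + r) := by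
        rintro x ⟨_, hx, _⟩
        by_contra hn
        rw [hv, Set.indicator_of_notMem hn] at hx
        exact lt_irrefl _ hx
      have := ENNReal.toReal_mono (by simp) (measure_mono (μ := volume) hs)
      simpa [hr0.le] using this
    unfold Fvol
    linarith


/-- Periodic minimum problem in intermediate-size domains with small volume fraction:
writing `τ_* = min{τ,1−τ}` and `τ^* = max{τ,1−τ}`, for `τ_* ≤ L ≤ τ^*` and
`0 < σ < (L+τ_*)²/(4L)` the least value of
`E^#_τ(v) = Fvol L v + φ_τ(v(0⁺), v(L⁻))` over `Adm(L,σ)` is `4√(σL)`, attained by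
`v = √(σL)·χ_{(s, s+√(σL))}` for any `0 ≤ s ≤ L − √(σL)`. -/
theorem periodic_min_intermediate_domain_small_fraction (τ σ L : ℝ)
    (hτ : τ ∈ Set.Icc (0 : ℝ) 1) (hL0 : 0 < L)
    (hL1 : min τ (1 - τ) ≤ L) (hL2 : L ≤ max τ (1 - τ))
    (hσ1 : 0 < σ) (hσ2 : σ < (L + min τ (1 - τ)) ^ 2 / (4 * L)) :
    (∀ v : ℝ → ℝ, ∀ a b : ℝ, Adm L σ v →
        Tendsto v (nhdsWithin 0 (Set.Ioo 0 L)) (nhds a) →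
        Tendsto v (nhdsWithin L (Set.Ioo 0 L)) (nhds b) →
        4 * Real.sqrt (σ * L) ≤ Fvol L v + phi τ a b) ∧
    (∀ s : ℝ, 0 ≤ s → s ≤ L - Real.sqrt (σ * L) →
      Adm L σ (Set.indicator (Set.Ioo s (s + Real.sqrt (σ * L)))
          (fun _ => Real.sqrt (σ * L))) ∧
      ∃ a b : ℝ,
        Tendsto (Set.indicator (Set.Ioo s (s + Real.sqrt (σ * L)))
            (fun _ => Real.sqrt (σ * L)))
          (nhdsWithin 0 (Set.Ioo 0 L)) (nhds a) ∧
        Tendsto (Set.indicator (Set.Ioo s (s + Real.sqrt (σ * L)))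
            (fun _ => Real.sqrt (σ * L)))
          (nhdsWithin L (Set.Ioo 0 L)) (nhds b) ∧
        Fvol L (Set.indicator (Set.Ioo s (s + Real.sqrt (σ * L)))
            (fun _ => Real.sqrt (σ * L))) + phi τ a b = 4 * Real.sqrt (σ * L)) := by
  have ht0 : 0 ≤ min τ (1 - τ) := le_min hτ.1 (by linarith [hτ.2])
  have hsum : min τ (1 - τ) + max τ (1 - τ) = 1 := by
    rw [min_add_max]; ring
  have hσL : 0 < σ * L := mul_pos hσ1 hL0
  have hr0 : 0 < Real.sqrt (σ * L) := Real.sqrt_pos.mpr hσL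
  have hsq : Real.sqrt (σ * L) ^ 2 = σ * L := Real.sq_sqrt hσL.le
  have hr : 2 * Real.sqrt (σ * L) < L + min τ (1 - τ) := by
    rw [lt_div_iff₀ (by linarith)] at hσ2
    refine lt_of_pow_lt_pow_left₀ 2 (by linarith) ?_
    nlinarith
  have hlow : ∀ v : ℝ → ℝ, ∀ a b : ℝ, Adm L σ v →
        Tendsto v (nhdsWithin 0 (Set.Ioo 0 L)) (nhds a) →
        Tendsto v (nhdsWithin L (Set.Ioo 0 L)) (nhds b) →
        4 * Real.sqrt (σ * L) ≤ Fvol L v + phi τ a b := by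
    intro v a b hv ha hb
    exact aux_lower τ _ L hτ hL0 hL1 hL2 hr0 hr v a b hv.1 hv.2.1 (hv.2.2.trans hsq.symm) ha hb
  refine ⟨hlow, ?_⟩
  intro s hs0 hs1
  obtain ⟨h1, h2, h3, a, b, h4, h5, h6⟩ := aux_attain τ _ L s hτ hL0 hr0 (by linarith)
    (by linarith) hs0 hs1 _ rfl
  rw [hsq] at h3
  have hadm : Adm L σ (Set.indicator (Set.Ioo s (s + Real.sqrt (σ * L)))
      (fun _ => Real.sqrt (σ * L))) := ⟨h1, h2, h3⟩
  exact ⟨hadm, a, b, h4, h5, le_antisymm h6 (hlow _ a b hadm h4 h5)⟩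
end
end
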